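/- arXiv:1402.0440 — 5 statements merged into one kernel-verified Lean document; each statement's English description precedes it below -/
import Mathlib

section
/- Let U ⊆ ℂ be a bounded, open, connected, simply connected set with 0 ∈ U, and let V ⊆ U be an open, connected, simply connected set with 0 ∈ V. Let g : 𝔻 → U and h : 𝔻 → V be biholomorphisms from the open unit disk with g(0) = 0 and h(0) = 0. Suppose ε > 0 and every point of the frontier of V lies at distance less than ε from the frontier of U. Then |g′(0)| − |h′(0)| ≤ 4·√|g′(0)|·√ε. -/
open Metric

lemma aux_log {f : ℂ → ℂ} (hf : DifferentiableOn ℂ f (ball 0 1)) (h0 : ∀ z ∈ ball (0:ℂ) 1, f z ≠ 0) :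
    ∃ L : ℂ → ℂ, (∀ z ∈ ball (0:ℂ) 1, HasDerivAt L (deriv f z / f z) z) ∧
      ∀ z ∈ ball (0:ℂ) 1, Complex.exp (L z) = f z := by
  have hd : DifferentiableOn ℂ (fun z => deriv f z / f z) (ball 0 1) :=
    (hf.deriv isOpen_ball).div hf h0
  have h00 : (0:ℂ) ∈ ball (0:ℂ) 1 := by simp
  obtain ⟨L, hL0, hL⟩ := hd.isExactOn_ball.with_val_at 0 (Complex.log (f 0))
  refine ⟨L, hL, ?_⟩
  have hfd : ∀ z ∈ ball (0:ℂ) 1, HasDerivAt f (deriv f z) z := fun z hz =>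
    (hf.differentiableAt (isOpen_ball.mem_nhds hz)).hasDerivAt
  have hder : ∀ z ∈ ball (0:ℂ) 1, HasDerivAt (fun z => f z * Complex.exp (- L z)) 0 z := by
    intro z hz
    have := h0 z hz
    refine ((hfd z hz).mul (hL z hz).neg.cexp).congr_deriv ?_
    simp only [Pi.neg_apply]
    rw [show f z * (Complex.exp (-L z) * -(deriv f z / f z)) = -(Complex.exp (-L z) * deriv f z) by
      field_simp]
    ring
  intro z hz
  have := (convex_ball (0:ℂ) 1).is_const_of_fderivWithin_eq_zero (𝕜 := ℂ) (f := fun z => f z * Complex.exp (- L z))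
    (fun z hz => (hder z hz).differentiableAt.differentiableWithinAt) (fun z hz => by
      rw [fderivWithin_of_isOpen isOpen_ball hz]
      have := (hder z hz).hasFDerivAt.fderiv
      rw [this]; ext; simp) hz h00
  simp only [hL0, Complex.exp_neg, Complex.exp_log (h0 0 h00)] at this
  rw [mul_inv_cancel₀ (h0 0 h00)] at this
  have h3 := Complex.exp_ne_zero (L z)
  field_simp at this
  exact this.symm

lemma aux_det (c : ℂ) : (c • (1 : ℂ →L[ℝ] ℂ)).det = ‖c‖^2 := by
  rw [← Complex.normSq_eq_norm_sq, ← Algebra.norm_complex_apply, Algebra.norm_apply]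
  rfl

open MeasureTheory

noncomputable def auxNu (S : Set ℂ) : ENNReal := ∫⁻ w in S, ENNReal.ofReal ((‖w‖^2)⁻¹)

lemma auxNu_image {f f' : ℂ → ℂ} {s : Set ℂ} (hs : MeasurableSet s)
   (hf : ∀ z ∈ s, HasDerivAt f (f' z) z) (hi : Set.InjOn f s) :
   auxNu (f '' s) = ∫⁻ z in s, ENNReal.ofReal (‖f' z / f z‖^2) := by
  unfold auxNu
  rw [lintegral_image_eq_lintegral_abs_det_fderiv_mul volume hs
    (fun z hz => (hf z hz).complexToReal_fderiv.hasFDerivWithinAt) hi]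
  refine lintegral_congr fun z => ?_
  rw [aux_det, ← ENNReal.ofReal_mul (abs_nonneg _)]
  congr 1
  rw [abs_of_nonneg (by positivity), norm_div, div_pow, div_eq_mul_inv]

lemma auxNu_inv {s : Set ℂ} (hs : MeasurableSet s) (h0 : ∀ z ∈ s, z ≠ 0) :
    auxNu (Inv.inv '' s) = auxNu s := by
  rw [auxNu_image hs (fun z hz => hasDerivAt_inv (h0 z hz)) inv_injective.injOn]
  unfold auxNu
  refine setLIntegral_congr_fun hs fun z hz => ?_
  have := norm_ne_zero_iff.2 (h0 z hz)
  congr 1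
  simp
  field_simp

lemma aux_polar {a b : ℝ} (ha : 0 < a) (F : ℂ → ENNReal) (hF : Measurable F) :
    ∫⁻ z in {z : ℂ | a ≤ ‖z‖ ∧ ‖z‖ ≤ b}, F z =
     ∫⁻ r in Set.Icc a b, ∫⁻ t in Set.Ioo (-Real.pi) Real.pi, ENNReal.ofReal r * 
        F (r * (Real.cos t + Real.sin t * Complex.I)) := by
  have hm : MeasurableSet {z : ℂ | a ≤ ‖z‖ ∧ ‖z‖ ≤ b} := by measurability
  have hps : Measurable (fun p : ℝ × ℝ => Complex.polarCoord.symm p) := by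
    simp only [Complex.polarCoord_symm_apply]
    fun_prop
  rw [← lintegral_indicator hm, ← Complex.lintegral_comp_polarCoord_symm]
  rw [polarCoord_target, Measure.volume_eq_prod, ← Measure.prod_restrict,
    lintegral_prod _ (by
      apply Measurable.aemeasurable
      refine Measurable.mul (by fun_prop) ?_
      exact (hF.indicator hm).comp hps)]
  have : Set.Icc a b = Set.Icc a b ∩ Set.Ioi 0 := by
    ext x; simp; intro h _; linarith
  rw [this, ← Measure.restrict_restrict measurableSet_Icc,
    ← lintegral_indicator measurableSet_Icc]
  refine setLIntegral_congr_fun measurableSet_Ioi fun r hr => ?_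
  have hr : 0 < r := hr
  by_cases h : r ∈ Set.Icc a b
  · rw [Set.indicator_of_mem h]
    refine lintegral_congr fun t => ?_
    rw [Set.indicator_of_mem]
    · simp
    · have := Complex.norm_polarCoord_symm (r,t)
      rw [Set.mem_ofPred_eq, this]
      simpa [abs_of_pos hr] using h
  · rw [Set.indicator_of_notMem h]
    rw [lintegral_eq_zero_iff']
    · refine Filter.Eventually.of_forall fun t => ?_
      beta_reduce
      rw [Set.indicator_of_notMem]
      · simp
      · have := Complex.norm_polarCoord_symm (r,t)
        rw [Set.mem_ofPred_eq, this]
        simpa [abs_of_pos hr] using h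
    · apply Measurable.aemeasurable
      refine Measurable.mul (by fun_prop) ?_
      apply (hF.indicator hm).comp
      simp only [Complex.polarCoord_symm_apply]
      fun_prop

lemma aux_log_int {a b : ℝ} (ha : 0 < a) (hab : a ≤ b) :
    ∫⁻ r in Set.Icc a b, ENNReal.ofReal (2 * Real.pi * r⁻¹) = ENNReal.ofReal (2 * Real.pi * Real.log (b/a)) := by
  rw [← integral_inv_of_pos ha (by linarith), ← intervalIntegral.integral_const_mul,
    intervalIntegral.integral_of_le hab, ← MeasureTheory.integral_Icc_eq_integral_Ioc, 
    ofReal_integral_eq_lintegral_ofReal]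
  · have : ContinuousOn (fun r:ℝ => 2 * Real.pi * r⁻¹) (Set.Icc a b) := by
      apply ContinuousOn.mul continuousOn_const
      exact continuousOn_inv₀.mono fun x hx => by simp at hx ⊢; linarith
    exact this.integrableOn_Icc
  · filter_upwards [ae_restrict_mem measurableSet_Icc] with r hr
    have : 0 < r := by have := hr.1; linarith
    simp only [Pi.zero_apply]; positivity

lemma auxNu_annulus {a b : ℝ} (ha : 0 < a) (hab : a ≤ b) :
    auxNu {z : ℂ | a ≤ ‖z‖ ∧ ‖z‖ ≤ b} = ENNReal.ofReal (2 * Real.pi * Real.log (b/a)) := by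
  unfold auxNu
  rw [aux_polar ha _ (by fun_prop), ← aux_log_int ha hab]
  refine setLIntegral_congr_fun measurableSet_Icc fun r hr => ?_
  have hr : 0 < r := by have := hr.1; linarith
  have h1 : ∀ t : ℝ, ‖(r:ℂ) * (Real.cos t + Real.sin t * Complex.I)‖ = r := by
    intro t
    have := Complex.norm_polarCoord_symm (r,t)
    rw [Complex.polarCoord_symm_apply] at this
    rw [this, abs_of_pos hr]
  simp only [h1]
  rw [lintegral_const, Measure.restrict_apply_univ, Real.volume_Ioo, ← ENNReal.ofReal_mul hr.le,
    ← ENNReal.ofReal_mul (by positivity)]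
  congr 1
  field_simp; ring

lemma aux_circle {m : ℂ → ℂ} (hm : DifferentiableOn ℂ m (ball 0 1)) (h1 : m 0 = 1) {r : ℝ} (hr : 0 < r)
    (hr1 : r < 1) : ENNReal.ofReal (2 * Real.pi) ≤
      ∫⁻ t in Set.Ioo (-Real.pi) Real.pi, ENNReal.ofReal (‖m (r * (Real.cos t + Real.sin t * Complex.I))‖^2) := by
  have hc : ∀ t : ℝ, (r:ℂ) * (Real.cos t + Real.sin t * Complex.I) = circleMap 0 r t := by
    intro t; simp [circleMap, Complex.exp_mul_I]
  simp only [hc]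
  have hcont : Continuous fun t => m (circleMap 0 r t) := by
    apply hm.continuousOn.comp_continuous (continuous_circleMap 0 r)
    intro t; simp [abs_of_pos hr, hr1]
  have havg : Real.circleAverage m 0 r = 1 := by
    rw [← h1]
    apply DiffContOnCl.circleAverage
    rw [abs_of_pos hr]
    apply DifferentiableOn.diffContOnCl
    apply hm.mono
    rw [closure_ball _ hr.ne']
    exact closedBall_subset_ball hr1
  have hint : ∫ t in (-Real.pi)..Real.pi, m (circleMap 0 r t) = 2 * Real.pi := by
    have hp : Function.Periodic (fun t => m (circleMap 0 r t)) (2 * Real.pi) := 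
      (periodic_circleMap 0 r).comp m
    have := hp.intervalIntegral_add_eq (-Real.pi) 0
    rw [show -Real.pi + 2 * Real.pi = Real.pi by ring, zero_add] at this
    rw [this]
    rw [Real.circleAverage_def] at havg
    have hpi : (Real.pi:ℂ) ≠ 0 := by exact_mod_cast Real.pi_ne_zero
    rw [Complex.real_smul] at havg
    push_cast at havg
    field_simp at havg
    rw [havg]
  have hre : ∫ t in (-Real.pi)..Real.pi, (2 * (m (circleMap 0 r t)).re - 1) = 2 * Real.pi := by
    have h2 : ∫ t in (-Real.pi)..Real.pi, (m (circleMap 0 r t)).re = 2 * Real.pi := by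
      have := Complex.reCLM.intervalIntegral_comp_comm (hcont.intervalIntegrable (μ := volume) (-Real.pi) Real.pi)
      simp only [Complex.reCLM_apply] at this
      rw [this, hint]
      simp
    rw [intervalIntegral.integral_sub, intervalIntegral.integral_const_mul, h2]
    · simp; ring
    · exact ((Complex.continuous_re.comp hcont).const_mul 2).intervalIntegrable _ _
    · simp
  have hpi := Real.pi_pos
  rw [← hre, intervalIntegral.integral_of_le (by linarith), integral_Ioc_eq_integral_Ioo]
  have hi1 : IntegrableOn (fun t => 2 * (m (circleMap 0 r t)).re - 1) (Set.Ioo (-Real.pi) Real.pi) :=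
    ((((Complex.continuous_re.comp hcont).const_mul 2).sub
      continuous_const).integrableOn_Icc).mono_set Set.Ioo_subset_Icc_self
  have hi2 : IntegrableOn (fun t => ‖m (circleMap 0 r t)‖^2) (Set.Ioo (-Real.pi) Real.pi) :=
    ((hcont.norm.pow 2).integrableOn_Icc).mono_set Set.Ioo_subset_Icc_self
  rw [← ofReal_integral_eq_lintegral_ofReal hi2 (Filter.Eventually.of_forall fun t => by
    simp only [Pi.zero_apply]; positivity)]
  apply ENNReal.ofReal_le_ofReal
  refine integral_mono hi1 hi2 fun t => ?_
  simp only
  rw [← Complex.normSq_eq_norm_sq, Complex.normSq_apply]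
  nlinarith [sq_nonneg ((m (circleMap 0 r t)).re - 1), sq_nonneg ((m (circleMap 0 r t)).im)]

lemma aux_lower {m : ℂ → ℂ} (hm : DifferentiableOn ℂ m (ball 0 1)) (h1 : m 0 = 1) (hmm : Measurable m)
    {a b : ℝ} (ha : 0 < a) (hab : a ≤ b) (hb : b < 1) :
    ENNReal.ofReal (2 * Real.pi * Real.log (b/a)) ≤
      ∫⁻ z in {z : ℂ | a ≤ ‖z‖ ∧ ‖z‖ ≤ b}, ENNReal.ofReal (‖m z / z‖^2) := by
  rw [aux_polar ha _ (by fun_prop), ← aux_log_int ha hab]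
  refine setLIntegral_mono' measurableSet_Icc fun r hr => ?_
  have hr0 : 0 < r := by have := hr.1; linarith
  have h2 : ∀ t : ℝ, ‖(r:ℂ) * (Real.cos t + Real.sin t * Complex.I)‖ = r := by
    intro t
    have := Complex.norm_polarCoord_symm (r,t)
    rw [Complex.polarCoord_symm_apply] at this
    rw [this, abs_of_pos hr0]
  calc ENNReal.ofReal (2 * Real.pi * r⁻¹) = ENNReal.ofReal (r⁻¹) * ENNReal.ofReal (2 * Real.pi) := by
        rw [← ENNReal.ofReal_mul (by positivity), mul_comm]
    _ ≤ ENNReal.ofReal (r⁻¹) * ∫⁻ t in Set.Ioo (-Real.pi) Real.pi, 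
        ENNReal.ofReal (‖m (r * (Real.cos t + Real.sin t * Complex.I))‖^2) := by
        gcongr
        exact aux_circle hm h1 hr0 (by have := hr.2; linarith)
    _ = _ := by
        rw [← lintegral_const_mul _ (by fun_prop)]
        refine lintegral_congr fun t => ?_
        rw [← ENNReal.ofReal_mul (by positivity), ← ENNReal.ofReal_mul (by positivity), norm_div, h2]
        congr 1
        field_simp

lemma aux_be {T : ℂ → ℂ} (hT : DifferentiableOn ℂ T (ball 0 1)) (hi : Set.InjOn T (ball 0 1)) (h0 : T 0 = 0)
    (hne : ∀ z ∈ ball (0:ℂ) 1, ∀ w ∈ ball (0:ℂ) 1, T z * T w ≠ 1) : ‖deriv T 0‖ ≤ 1 := by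
  by_contra hcon
  push Not at hcon
  have h00 : (0:ℂ) ∈ ball (0:ℂ) 1 := by simp
  have hd0 : deriv T 0 ≠ 0 := by
    intro h; simp [h] at hcon; linarith
  have hTd : ∀ z ∈ ball (0:ℂ) 1, HasDerivAt T (deriv T z) z := fun z hz =>
    (hT.differentiableAt (isOpen_ball.mem_nhds hz)).hasDerivAt
  have hTne : ∀ z ∈ ball (0:ℂ) 1, z ≠ 0 → T z ≠ 0 := fun z hz hz0 h =>
    hz0 (hi hz h00 (by rw [h, h0]))
  set τ := dslope T 0 with hτdef
  have hτ : DifferentiableOn ℂ τ (ball 0 1) :=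
    (Complex.differentiableOn_dslope (isOpen_ball.mem_nhds h00)).2 hT
  have hTτ : ∀ z, T z = z * τ z := by
    intro z
    have := sub_smul_dslope T 0 z
    simp [h0] at this; exact this.symm
  have hτ0 : τ 0 = deriv T 0 := by simp [hτdef]
  have hτne : ∀ z ∈ ball (0:ℂ) 1, τ z ≠ 0 := by
    intro z hz h
    by_cases hz0 : z = 0
    · rw [hz0, hτ0] at h; exact hd0 h
    · exact hTne z hz hz0 (by rw [hTτ, h, mul_zero])
  have hm0 : DifferentiableOn ℂ (fun z => 1 + z * deriv τ z / τ z) (ball 0 1) :=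
    (differentiableOn_const _).add ((differentiableOn_id.mul (hτ.deriv isOpen_ball)).div hτ hτne)
  classical
  set m : ℂ → ℂ := (ball (0:ℂ) 1).piecewise (fun z => 1 + z * deriv τ z / τ z) (fun _ => 0) with hmdef
  have hmeq : Set.EqOn m (fun z => 1 + z * deriv τ z / τ z) (ball 0 1) := Set.piecewise_eqOn _ _ _
  have hm : DifferentiableOn ℂ m (ball 0 1) := hm0.congr hmeq
  have hmm : Measurable m := ContinuousOn.measurable_piecewise hm0.continuousOn continuousOn_const measurableSet_ball
  have hm1 : m 0 = 1 := by rw [hmeq h00]; simp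
  have hmT : ∀ z ∈ ball (0:ℂ) 1, z ≠ 0 → deriv T z / T z = m z / z := by
    intro z hz hz0
    rw [hmeq hz]
    have h1 : HasDerivAt T (1 * τ z + z * deriv τ z) z := by
      have := (hasDerivAt_id z).mul (hτ.differentiableAt (isOpen_ball.mem_nhds hz)).hasDerivAt
      exact this.congr_of_eventuallyEq (Filter.Eventually.of_forall hTτ)
    rw [h1.deriv, hTτ z]
    have := hτne z hz
    field_simp
  -- choose parameters
  obtain ⟨a', ha1, ha2⟩ := exists_between hcon
  set s : ℝ := (a'⁻¹ + 1)/2 with hs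
  have hainv : a'⁻¹ < 1 := inv_lt_one_of_one_lt₀ ha1
  have ha'0 : 0 < a' := by linarith
  have hainv0 : 0 < a'⁻¹ := by positivity
  have hs1 : s < 1 := by rw [hs]; linarith
  have hs0 : 0 < s := by rw [hs]; linarith
  have hsa : 1 < s * a' := by
    have : a'⁻¹ < s := by rw [hs]; linarith
    calc 1 = a'⁻¹ * a' := by field_simp
      _ < _ := by gcongr
  have hcl : closedBall (0:ℂ) s ⊆ ball 0 1 := closedBall_subset_ball hs1
  obtain ⟨ρ₀, hρ₀, hnear⟩ : ∃ ρ₀ > 0, ∀ z, ‖z‖ < ρ₀ → a' < ‖τ z‖ := by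
    have hc : ContinuousAt (fun z => ‖τ z‖) 0 :=
      (hτ.continuousOn.continuousAt (isOpen_ball.mem_nhds h00)).norm
    have := hc.eventually (lt_mem_nhds (a := a') (by simpa only [hτ0] using ha2))
    obtain ⟨e, he, h⟩ := Metric.eventually_nhds_iff.1 this
    exact ⟨e, he, fun z hz => h (by simpa using hz)⟩
  obtain ⟨K, hK0, hK⟩ : ∃ K > 0, ∀ z ∈ closedBall (0:ℂ) s, K ≤ ‖τ z‖ := by
    obtain ⟨z, hz, hmin⟩ := (isCompact_closedBall (0:ℂ) s).exists_isMinOn ⟨0, by simp [hs0.le]⟩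
      (hτ.continuousOn.mono hcl).norm
    exact ⟨‖τ z‖, norm_pos_iff.2 (hτne z (hcl hz)), fun w hw => hmin hw⟩
  obtain ⟨M, hM⟩ : ∃ M, ∀ z ∈ closedBall (0:ℂ) s, ‖T z‖ ≤ M :=
    (isCompact_closedBall (0:ℂ) s).exists_bound_of_continuousOn (hT.continuousOn.mono hcl)
  obtain ⟨ρ, hρ, hρs, hρK, hρM⟩ : ∃ ρ > 0, ρ ≤ s ∧ a' * ρ ≤ K * ρ₀ ∧ a' * ρ * (|M| + 1) ≤ 1 := by
    refine ⟨min s (min (K * ρ₀ / a') (1 / (a' * (|M| + 1)))), by positivity, min_le_left _ _, ?_, ?_⟩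
    · calc _ ≤ a' * (K * ρ₀ / a') := by gcongr; exact (min_le_right _ _).trans (min_le_left _ _)
        _ = _ := by field_simp
    · calc _ ≤ a' * (1 / (a' * (|M| + 1))) * (|M| + 1) := by
            gcongr; exact (min_le_right _ _).trans (min_le_right _ _)
        _ = _ := by field_simp
  set A := {z : ℂ | ρ ≤ ‖z‖ ∧ ‖z‖ ≤ s} with hA
  have hAm : MeasurableSet A := by rw [hA]; measurability
  have hAcl : A ⊆ closedBall 0 s := fun z hz => by simpa using hz.2
  have hAb : A ⊆ ball 0 1 := hAcl.trans hcl
  have hA0 : ∀ z ∈ A, z ≠ 0 := fun z hz h => by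
    have := hz.1; rw [h, norm_zero] at this; linarith
  have hAc : IsCompact A := by
    refine (isCompact_closedBall (0:ℂ) s).of_isClosed_subset ?_ hAcl
    exact (isClosed_le continuous_const continuous_norm).inter (isClosed_le continuous_norm continuous_const)
  set δ := a' * ρ with hδ
  have hδ0 : 0 < δ := by positivity
  have hδ1 : δ ≤ 1 := by nlinarith [abs_nonneg M]
  have hlow : ∀ z ∈ A, δ ≤ ‖T z‖ := by
    intro z hz
    rw [hTτ, norm_mul]
    rcases lt_or_ge ‖z‖ ρ₀ with h | h
    · have := hnear z h
      have := hz.1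
      rw [hδ, mul_comm]
      gcongr
    · have := hK z (hAcl hz)
      calc δ ≤ ρ₀ * K := by rw [hδ]; linarith
        _ ≤ _ := by gcongr
  have hup : ∀ z ∈ A, ‖T z‖ ≤ δ⁻¹ := by
    intro z hz
    have h1 := hM z (hAcl hz)
    rw [le_inv_comm₀ (by have := hlow z hz; linarith) hδ0]
    rw [le_inv_comm₀ hδ0 (by have := hlow z hz; linarith)]
    rw [← one_div, le_div_iff₀ hδ0]
    have := le_abs_self M
    nlinarith
  set S := T '' A with hS
  have hSm : MeasurableSet S := (hAc.image_of_continuousOn (hT.continuousOn.mono hAb)).measurableSet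
  set B := {z : ℂ | δ ≤ ‖z‖ ∧ ‖z‖ ≤ δ⁻¹} with hB
  have hSB : S ⊆ B := by rintro _ ⟨z, hz, rfl⟩; exact ⟨hlow z hz, hup z hz⟩
  have hSB' : Inv.inv '' S ⊆ B := by
    rintro _ ⟨w, hw, rfl⟩
    obtain ⟨h1, h2⟩ := hSB hw
    refine ⟨?_, ?_⟩
    · rw [norm_inv]; rwa [le_inv_comm₀ hδ0 (by linarith)]
    · rw [norm_inv]; gcongr
  have hS0 : ∀ w ∈ S, w ≠ 0 := fun w hw h => by
    have := (hSB hw).1; rw [h, norm_zero] at this; linarith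
  have hdisj : Disjoint S (Inv.inv '' S) := by
    rw [Set.disjoint_left]
    rintro _ ⟨z, hz, rfl⟩ ⟨_, ⟨w, hw, rfl⟩, h⟩
    refine hne z (hAb hz) w (hAb hw) ?_
    rw [← h]
    exact inv_mul_cancel₀ (hS0 _ ⟨w, hw, rfl⟩)
  have hSi : MeasurableSet (Inv.inv '' S) := by
    rw [Set.image_inv_eq_inv]; exact hSm.inv
  have hsum : auxNu S + auxNu S ≤ ENNReal.ofReal (2 * Real.pi * Real.log (δ⁻¹/δ)) := by
    rw [← auxNu_annulus hδ0 (hδ1.trans (by rw [one_le_inv₀ hδ0]; exact hδ1))]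
    nth_rw 2 [← auxNu_inv hSm hS0]
    unfold auxNu
    rw [← lintegral_union hSi hdisj]
    exact lintegral_mono_set (Set.union_subset hSB hSB')
  have hlw : ENNReal.ofReal (2 * Real.pi * Real.log (s/ρ)) ≤ auxNu S := by
    rw [hS, auxNu_image hAm (fun z hz => hTd z (hAb hz)) (hi.mono hAb)]
    refine (aux_lower hm hm1 hmm hρ hρs hs1).trans (le_of_eq ?_)
    refine setLIntegral_congr_fun hAm fun z hz => ?_
    rw [hmT z (hAb hz) (hA0 z hz)]
  have hpi := Real.pi_pos
  have hl0 : 0 ≤ Real.log (s/ρ) := Real.log_nonneg (by rw [le_div_iff₀ hρ]; linarith)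
  have hfin := (add_le_add hlw hlw).trans hsum
  rw [← ENNReal.ofReal_add (by positivity) (by positivity)] at hfin
  have hl1 : 0 ≤ Real.log (δ⁻¹/δ) := Real.log_nonneg (by
    rw [le_div_iff₀ hδ0]; have := (one_le_inv₀ hδ0).2 hδ1; linarith)
  rw [ENNReal.ofReal_le_ofReal_iff (by positivity)] at hfin
  have e1 : Real.log (δ⁻¹/δ) = -2 * Real.log δ := by
    rw [Real.log_div (by positivity) (by positivity), Real.log_inv]; ring
  have e2 : Real.log δ = Real.log a' + Real.log ρ := Real.log_mul ha'0.ne' hρ.ne'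
  have e3 : Real.log (s/ρ) = Real.log s - Real.log ρ := Real.log_div hs0.ne' hρ.ne'
  have e4 : 0 < Real.log (s * a') := Real.log_pos hsa
  rw [Real.log_mul hs0.ne' ha'0.ne'] at e4
  rw [e1, e3, e2] at hfin
  nlinarith

lemma aux_koebe {f : ℂ → ℂ} (hf : DifferentiableOn ℂ f (ball 0 1)) (hi : Set.InjOn f (ball 0 1))
    (h0 : ∀ z ∈ ball (0:ℂ) 1, f z ≠ 0) : ‖deriv f 0‖ ≤ 4 * ‖f 0‖ := by
  obtain ⟨L, hL, hLe⟩ := aux_log hf h0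
  have h00 : (0:ℂ) ∈ ball (0:ℂ) 1 := by simp
  set q : ℂ → ℂ := fun z => Complex.exp (L z / 2) with hq
  have hq2 : ∀ z ∈ ball (0:ℂ) 1, q z * q z = f z := by
    intro z hz
    rw [hq, ← hLe z hz]; simp only
    rw [← Complex.exp_add]; congr 1; ring
  have hqne : ∀ z, q z ≠ 0 := fun z => Complex.exp_ne_zero _
  have hqd : ∀ z ∈ ball (0:ℂ) 1, HasDerivAt q (q z * ((deriv f z / f z) / 2)) z := fun z hz =>
    ((hL z hz).div_const 2).cexp
  have hsum : ∀ z ∈ ball (0:ℂ) 1, ∀ w ∈ ball (0:ℂ) 1, q z + q w ≠ 0 := by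
    intro z hz w hw h
    have h1 : q z = - q w := eq_neg_of_add_eq_zero_left h
    have : z = w := hi hz hw (by rw [← hq2 z hz, ← hq2 w hw, h1]; ring)
    rw [this] at h
    have : 2 * q w = 0 := by rw [← h]; ring
    simp [hqne] at this
  set T : ℂ → ℂ := fun z => (q z - q 0) / (q z + q 0) with hT
  have hTd : ∀ z ∈ ball (0:ℂ) 1, HasDerivAt T _ z := fun z hz =>
    ((hqd z hz).sub_const (q 0)).div ((hqd z hz).add_const (q 0)) (hsum z hz 0 h00)
  have hb := aux_be (T := T) (fun z hz => (hTd z hz).differentiableAt.differentiableWithinAt) ?_ ?_ ?_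
  · have h1 := (hTd 0 h00).deriv
    have h2 : deriv f 0 = 4 * f 0 * deriv T 0 := by
      rw [h1, ← hq2 0 h00]
      have := hqne 0
      have h3 : q 0 + q 0 ≠ 0 := hsum 0 h00 0 h00
      rw [show q 0 + q 0 = 2 * q 0 by ring]
      field_simp
      ring
    rw [h2, norm_mul, norm_mul]
    have := norm_nonneg (f 0)
    simp only [Complex.norm_ofNat]
    nlinarith
  · intro z hz w hw h
    have h1 := hsum z hz 0 h00
    have h2 := hsum w hw 0 h00
    simp only [hT] at h
    rw [div_eq_div_iff h1 h2] at h
    have h3 : 2 * q 0 * (q z - q w) = 0 := by linear_combination h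
    have h4 : q z = q w := by
      simpa [hqne, sub_eq_zero] using h3
    exact hi hz hw (by rw [← hq2 z hz, ← hq2 w hw, h4])
  · simp [hT]
  · intro z hz w hw h
    have h1 := hsum z hz 0 h00
    have h2 := hsum w hw 0 h00
    simp only [hT] at h
    rw [div_mul_div_comm, div_eq_one_iff_eq (mul_ne_zero h1 h2)] at h
    have h3 : 2 * q 0 * (q z + q w) = 0 := by linear_combination -h
    simp [hqne, hsum z hz w hw] at h3

lemma aux_koebe_pt {f : ℂ → ℂ} (hf : DifferentiableOn ℂ f (ball 0 1)) (hi : Set.InjOn f (ball 0 1))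
    (h0 : ∀ z ∈ ball (0:ℂ) 1, f z ≠ 0) {w : ℂ} (hw : ‖w‖ < 1) :
    ‖deriv f w / f w‖ ≤ 4 / (1 - ‖w‖^2) := by
  set c := (starRingEnd ℂ) w with hc
  have h00 : (0:ℂ) ∈ ball (0:ℂ) 1 := by simp
  have hwc : w * c = ((‖w‖^2 : ℝ) : ℂ) := by
    rw [hc, Complex.mul_conj, Complex.normSq_eq_norm_sq]
  have hw2 : 0 < 1 - ‖w‖^2 := by nlinarith [norm_nonneg w]
  have hden : ∀ z ∈ ball (0:ℂ) 1, 1 + c * z ≠ 0 := by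
    intro z hz h
    have hz : ‖z‖ < 1 := by simpa using hz
    have h1 : c * z = -1 := by linear_combination h
    have h2 : ‖c‖ * ‖z‖ = 1 := by rw [← norm_mul, h1]; simp
    rw [hc, RCLike.norm_conj] at h2
    nlinarith [norm_nonneg w, norm_nonneg z]
  set φ : ℂ → ℂ := fun z => (z + w) / (1 + c * z) with hφ
  have hφd : ∀ z ∈ ball (0:ℂ) 1, HasDerivAt φ ((1 * (1 + c * z) - (z + w) * (c * 1)) / (1 + c * z)^2) z := by
    intro z hz
    exact ((hasDerivAt_id z).add_const w).div (((hasDerivAt_id z).const_mul c).const_add 1) (hden z hz)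
  have hmaps : ∀ z ∈ ball (0:ℂ) 1, φ z ∈ ball (0:ℂ) 1 := by
    intro z hz
    have hd := hden z hz
    have hz : ‖z‖ < 1 := by simpa using hz
    have hz2 : 0 < 1 - ‖z‖^2 := by nlinarith [norm_nonneg z]
    have key : ‖z + w‖^2 < ‖1 + c * z‖^2 := by
      have := mul_pos hw2 hz2
      rw [← Complex.normSq_eq_norm_sq, ← Complex.normSq_eq_norm_sq, Complex.normSq_apply, Complex.normSq_apply] at this ⊢
      simp [hc] 
      nlinarith
    simp only [mem_ball_zero_iff, hφ, norm_div]
    rw [div_lt_one (norm_pos_iff.2 hd)]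
    exact lt_of_pow_lt_pow_left₀ 2 (norm_nonneg _) key
  have hφi : Set.InjOn φ (ball 0 1) := by
    intro x hx y hy h
    simp only [hφ] at h
    rw [div_eq_div_iff (hden x hx) (hden y hy)] at h
    have h3 : (1 - w * c) * (x - y) = 0 := by linear_combination h
    have h4 : 1 - w * c ≠ 0 := by
      rw [hwc]; exact_mod_cast hw2.ne'
    simpa [h4, sub_eq_zero] using h3
  have hφ0 : φ 0 = w := by simp [hφ]
  have hφ0' : HasDerivAt φ (((1 - ‖w‖^2 : ℝ)) : ℂ) 0 := by
    refine (hφd 0 h00).congr_deriv ?_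
    have := hwc
    push_cast at this ⊢
    simp
    linear_combination this
  have hwb : w ∈ ball (0:ℂ) 1 := by simpa using hw
  have := aux_koebe (f := f ∘ φ)
    (hf.comp (fun z hz => (hφd z hz).differentiableAt.differentiableWithinAt) hmaps)
    (hi.comp hφi hmaps) (fun z hz => h0 _ (hmaps z hz))
  have hfd : HasDerivAt f (deriv f w) (φ 0) := by
    rw [hφ0]
    exact (hf.differentiableAt (isOpen_ball.mem_nhds hwb)).hasDerivAt
  rw [(hfd.comp 0 hφ0').deriv, norm_mul, Complex.norm_real, Real.norm_of_nonneg hw2.le, 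
    Function.comp_apply, hφ0] at this
  rw [norm_div, div_le_div_iff₀ (norm_pos_iff.2 (h0 w hwb)) hw2]
  exact this

lemma aux_growth {f : ℂ → ℂ} (hf : DifferentiableOn ℂ f (ball 0 1)) (hi : Set.InjOn f (ball 0 1))
    (h0 : ∀ z ∈ ball (0:ℂ) 1, f z ≠ 0) {w : ℂ} (hw : ‖w‖ < 1) :
    ‖f 0‖ * ((1 - ‖w‖) / (1 + ‖w‖))^2 ≤ ‖f w‖ := by
  obtain ⟨L, hL, hLe⟩ := aux_log hf h0
  have hwn := norm_nonneg w
  have hmem : ∀ t ∈ Set.Icc (0:ℝ) 1, (t:ℂ) * w ∈ ball (0:ℂ) 1 := by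
    intro t ht
    simp only [mem_ball_zero_iff, norm_mul, Complex.norm_real, Real.norm_of_nonneg ht.1]
    nlinarith [ht.2, ht.1]
  have hLt : ∀ t ∈ Set.Icc (0:ℝ) 1, HasDerivAt (fun t : ℝ => L (t * w) - L 0)
      (deriv f (t * w) / f (t * w) * w) t := by
    intro t ht
    have h1 : HasDerivAt (fun t : ℝ => (t:ℂ) * w) (1 * w) t :=
      (Complex.ofRealCLM.hasDerivAt).mul_const w
    have := ((hL _ (hmem t ht)).comp t h1).sub_const (L 0)
    rw [one_mul] at this
    exact this
  set B : ℝ → ℝ := fun t => 2 * (Real.log (1 + t * ‖w‖) - Real.log (1 - t * ‖w‖)) with hB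
  have hpos : ∀ t ∈ Set.Icc (0:ℝ) 1, 0 < 1 + t * ‖w‖ ∧ 0 < 1 - t * ‖w‖ := by
    intro t ht
    constructor <;> nlinarith [ht.2, ht.1]
  have hBt : ∀ t ∈ Set.Icc (0:ℝ) 1, HasDerivAt B (4 / (1 - (t * ‖w‖)^2) * ‖w‖) t := by
    intro t ht
    obtain ⟨p1, p2⟩ := hpos t ht
    have h1 : HasDerivAt (fun t : ℝ => 1 + t * ‖w‖) (1 * ‖w‖) t :=
      ((hasDerivAt_id t).mul_const ‖w‖).const_add 1
    have h2 : HasDerivAt (fun t : ℝ => 1 - t * ‖w‖) (-(1 * ‖w‖)) t :=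
      ((hasDerivAt_id t).mul_const ‖w‖).const_sub 1
    refine (((h1.log p1.ne').sub (h2.log p2.ne')).const_mul 2).congr_deriv ?_
    rw [show 1 - (t * ‖w‖)^2 = (1 + t * ‖w‖) * (1 - t * ‖w‖) by ring]
    have q1 := p1.ne'
    have q2 := p2.ne'
    have alg : ∀ n P Q : ℝ, P ≠ 0 → Q ≠ 0 → P + Q = 2 →
        2 * (1 * n / P - -(1 * n) / Q) = 4 / (P * Q) * n := by
      intro n P Q hP hQ hPQ
      have : 2 * (1 * n / P - -(1 * n) / Q) = 2 * (P + Q) / (P * Q) * n := by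
        field_simp
        ring
      rw [this, hPQ]; norm_num
    exact alg _ _ _ q1 q2 (by ring)
  have key := image_norm_le_of_norm_deriv_right_le_deriv_boundary' (a := 0) (b := 1)
    (f := fun t : ℝ => L (t * w) - L 0) (B := B)
    (fun t ht => (hLt t ht).continuousAt.continuousWithinAt)
    (fun t ht => (hLt t (Set.Ico_subset_Icc_self ht)).hasDerivWithinAt) (by simp [hB])
    (fun t ht => (hBt t ht).continuousAt.continuousWithinAt)
    (fun t ht => (hBt t (Set.Ico_subset_Icc_self ht)).hasDerivWithinAt)
    (fun t ht => by
      have ht' := Set.Ico_subset_Icc_self ht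
      rw [norm_mul]
      gcongr
      have hh := hmem t ht'
      have := aux_koebe_pt hf hi h0 (w := t * w) (by simpa only [mem_ball_zero_iff] using hh)
      rwa [norm_mul (t:ℂ), Complex.norm_real, Real.norm_of_nonneg ht'.1] at this)
    (Set.right_mem_Icc.2 zero_le_one)
  have h00 : (0:ℂ) ∈ ball (0:ℂ) 1 := by simp
  have hwb : w ∈ ball (0:ℂ) 1 := by simpa using hw
  have hre : (L 0).re - B 1 ≤ (L w).re := by
    have h1 := Complex.abs_re_le_norm (L w - L 0)
    simp only [Complex.ofReal_one, one_mul] at key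
    have h2 := (abs_le.1 (h1.trans key)).1
    simp at h2
    linarith
  rw [← hLe 0 h00, ← hLe w hwb, Complex.norm_exp, Complex.norm_exp]
  have hexp : ((1 - ‖w‖) / (1 + ‖w‖))^2 = Real.exp (- B 1) := by
    have e : - B 1 = Real.log (((1 - ‖w‖) / (1 + ‖w‖))^2) := by
      rw [Real.log_pow, Real.log_div (by linarith) (by linarith)]
      simp [hB]; ring
    rw [e, Real.exp_log]
    have : 0 < 1 - ‖w‖ := by linarith
    positivity
  rw [hexp, ← Real.exp_add]
  gcongr
  linarith

lemma aux_inv {h : ℂ → ℂ} (hh : DifferentiableOn ℂ h (ball 0 1)) (hi : Set.InjOn h (ball 0 1))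
    {Ψ : ℂ → ℂ} (hΨ : ∀ z ∈ ball (0:ℂ) 1, Ψ (h z) = z) {a : ℂ} (ha : a ∈ ball (0:ℂ) 1) :
    DifferentiableAt ℂ Ψ (h a) := by
  have hbn : ∀ a ∈ ball (0:ℂ) 1, ∀ᶠ z in nhds a, z ∈ ball (0:ℂ) 1 := fun a ha => isOpen_ball.mem_nhds ha
  have hne : ∀ a ∈ ball (0:ℂ) 1, ¬ ∀ᶠ z in nhds a, h z = h a := by
    intro a ha hcon
    have h1 : ∀ᶠ z in nhds a, z = a := by
      filter_upwards [hcon, hbn a ha] with z hz hzb using hi hzb ha hz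
    have h2 : ∀ᶠ z in nhdsWithin a {a}ᶜ, z = a := h1.filter_mono nhdsWithin_le_nhds
    have h3 : ∀ᶠ z in nhdsWithin a {a}ᶜ, z ≠ a := eventually_mem_nhdsWithin
    obtain ⟨z, hz, hz'⟩ := (h2.and h3).exists
    exact hz' hz
  have han : ∀ a ∈ ball (0:ℂ) 1, AnalyticAt ℂ h a := fun a ha => hh.analyticAt (isOpen_ball.mem_nhds ha)
  have hle : ∀ a ∈ ball (0:ℂ) 1, nhds (h a) ≤ Filter.map h (nhds a) := fun a ha =>
    (han a ha).eventually_constant_or_nhds_le_map_nhds.resolve_left (hne a ha)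
  have hct : ∀ a ∈ ball (0:ℂ) 1, Filter.Tendsto Ψ (nhds (h a)) (nhds a) := by
    intro a ha
    refine Filter.Tendsto.mono_left ?_ (hle a ha)
    rw [Filter.tendsto_map'_iff]
    refine Filter.tendsto_id.congr' ?_
    filter_upwards [hbn a ha] with z hz using (hΨ z hz).symm
  have hrt : ∀ a ∈ ball (0:ℂ) 1, ∀ᶠ y in nhds (h a), h (Ψ y) = y := by
    intro a ha
    refine Filter.Eventually.filter_mono (hle a ha) ?_
    rw [Filter.eventually_map]
    filter_upwards [hbn a ha] with z hz
    rw [hΨ z hz]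
  have hgood : ∀ a ∈ ball (0:ℂ) 1, deriv h a ≠ 0 → DifferentiableAt ℂ Ψ (h a) := by
    intro a ha hd
    have := HasDerivAt.of_local_left_inverse (f := h) (g := Ψ) (a := h a) (f' := deriv h a)
      (by unfold ContinuousAt; rw [hΨ a ha]; exact hct a ha)
      (by rw [hΨ a ha]; exact (han a ha).differentiableAt.hasDerivAt) hd (hrt a ha)
    exact this.differentiableAt
  have hpun : ∀ᶠ z in nhdsWithin a {a}ᶜ, deriv h z ≠ 0 := by
    rcases (han a ha).deriv.eventually_eq_zero_or_eventually_ne_zero with h1 | h1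
    · exfalso
      apply hne a ha
      obtain ⟨e, he, hb⟩ := Metric.eventually_nhds_iff_ball.1 (h1.and (hbn a ha))
      filter_upwards [ball_mem_nhds a he] with z hz
      refine (convex_ball a e).is_const_of_fderivWithin_eq_zero (𝕜 := ℂ) (f := h)
        (fun z hz => (han z (hb z hz).2).differentiableAt.differentiableWithinAt) (fun z hz => ?_) hz (mem_ball_self he)
      rw [fderivWithin_of_isOpen isOpen_ball hz]
      ext
      simp [(hb z hz).1]
    · exact h1
  apply AnalyticAt.differentiableAt
  apply Complex.analyticAt_of_differentiable_on_punctured_nhds_of_continuousAt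
  · have h1 : Filter.Tendsto Ψ (nhdsWithin (h a) {h a}ᶜ) (nhdsWithin a {a}ᶜ) := by
      refine tendsto_nhdsWithin_of_tendsto_nhds_of_eventually_within _
        ((hct a ha).mono_left nhdsWithin_le_nhds) ?_
      filter_upwards [eventually_mem_nhdsWithin, (hrt a ha).filter_mono nhdsWithin_le_nhds] with y hy hy2 hy3
      apply hy
      rw [Set.mem_singleton_iff] at hy3 ⊢
      rw [← hy2, hy3]
    filter_upwards [h1.eventually hpun, (hrt a ha).filter_mono nhdsWithin_le_nhds,
      ((hct a ha).mono_left nhdsWithin_le_nhds).eventually (hbn a ha)] with y h2 h3 h4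
    have := hgood _ h4 h2
    rwa [h3] at this
  · unfold ContinuousAt; rw [hΨ a ha]; exact hct a ha

theorem conformal_radius_variation
    (U V : Set ℂ)
    (hUbd : Bornology.IsBounded U) (hUopen : IsOpen U) (hUconn : IsConnected U)
    (hUsc : SimplyConnectedSpace U) (hU0 : (0 : ℂ) ∈ U)
    (hVU : V ⊆ U) (hVopen : IsOpen V) (hVconn : IsConnected V)
    (hVsc : SimplyConnectedSpace V) (hV0 : (0 : ℂ) ∈ V)
    (g h : ℂ → ℂ)
    (hgdiff : DifferentiableOn ℂ g (ball (0 : ℂ) 1))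
    (hgbij : Set.BijOn g (ball (0 : ℂ) 1) U) (hg0 : g 0 = 0)
    (hhdiff : DifferentiableOn ℂ h (ball (0 : ℂ) 1))
    (hhbij : Set.BijOn h (ball (0 : ℂ) 1) V) (hh0 : h 0 = 0)
    (ε : ℝ) (hε : 0 < ε)
    (hfr : ∀ z ∈ frontier V, infDist z (frontier U) < ε) :
    ‖deriv g 0‖ - ‖deriv h 0‖ ≤
      4 * Real.sqrt ‖deriv g 0‖ * Real.sqrt ε := by
  have h00 : (0:ℂ) ∈ ball (0:ℂ) 1 := by simp
  by_contra hcon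
  push Not at hcon
  set r := ‖deriv g 0‖ with hr
  set x := Real.sqrt r with hx
  set y := Real.sqrt ε with hy
  have hhn := norm_nonneg (deriv h 0)
  have hy0 : 0 < y := Real.sqrt_pos.2 hε
  have hx0' : 0 ≤ x := Real.sqrt_nonneg r
  have hr0 : 0 < r := by
    have : 0 ≤ 4 * x * y := by positivity
    linarith
  have hx0 : 0 < x := Real.sqrt_pos.2 hr0
  have hxx : x * x = r := Real.mul_self_sqrt hr0.le
  have hyy : y * y = ε := Real.mul_self_sqrt hε.le
  set s := 1 - 4 * y / x with hs
  have hrs : r * s = r - 4 * x * y := by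
    rw [hs, ← hxx]; field_simp
  have hs0 : 0 < s := by
    by_contra hn
    push Not at hn
    nlinarith
  have hs1 : s < 1 := by
    have : 0 < 4 * y / x := by positivity
    rw [hs]; linarith
  have hsb : ball (0:ℂ) s ⊆ ball 0 1 := ball_subset_ball hs1.le
  -- frontier nonempty
  have hfne : (frontier U).Nonempty := by
    rw [nonempty_frontier_iff]
    refine ⟨⟨0, hU0⟩, ?_⟩
    rintro rfl
    exact NormedSpace.unbounded_univ ℝ ℂ hUbd
  have hsub : ball (0:ℂ) s ⊆ ball (0:ℂ) 1 ∩ g ⁻¹' V := by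
    have hO : IsOpen (ball (0:ℂ) 1 ∩ g ⁻¹' V) := hgdiff.continuousOn.isOpen_inter_preimage isOpen_ball hVopen
    refine (convex_ball (0:ℂ) s).isPreconnected.subset_of_closure_inter_subset hO
      ⟨0, by simp [hs0], h00, by simpa [hg0] using hV0⟩ ?_
    rintro w ⟨hwcl, hw⟩
    have hw1 := hsb hw
    have hws : ‖w‖ < s := by simpa using hw
    refine ⟨hw1, ?_⟩
    by_contra hwV
    have hcl : g w ∈ closure V := by
      have hc : ContinuousWithinAt g (ball (0:ℂ) 1 ∩ g ⁻¹' V) w :=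
        (hgdiff.continuousOn w hw1).mono Set.inter_subset_left
      exact hc.mem_closure hwcl fun z hz => hz.2
    have hfrV : g w ∈ frontier V := by
      rw [hVopen.frontier_eq]; exact ⟨hcl, hwV⟩
    obtain ⟨p, hp, hpd⟩ := (infDist_lt_iff hfne).1 (hfr _ hfrV)
    rw [hUopen.frontier_eq] at hp
    have hGd : DifferentiableOn ℂ (fun z => g z - p) (ball 0 1) := hgdiff.sub_const p
    have hGi : Set.InjOn (fun z => g z - p) (ball 0 1) := fun a ha b hb hab =>
      hgbij.injOn ha hb (by simpa using hab)
    have hG0 : ∀ z ∈ ball (0:ℂ) 1, g z - p ≠ 0 := fun z hz he =>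
      hp.2 (by rw [← sub_eq_zero.1 he]; exact hgbij.mapsTo hz)
    have k1 := aux_koebe hGd hGi hG0
    have k2 := aux_growth hGd hGi hG0 (w := w) (by linarith)
    rw [deriv_sub_const, ← hr] at k1
    rw [dist_eq_norm] at hpd
    have hwn := norm_nonneg w
    have hu0 : 0 < (1 - ‖w‖) / (1 + ‖w‖) := div_pos (by linarith) (by linarith)
    set u := (1 - ‖w‖) / (1 + ‖w‖) with hu
    have k3 : r * u^2 < 4 * ε := by
      have : r * u^2 ≤ 4 * ‖g 0 - p‖ * u^2 := by gcongr
      nlinarith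
    have k4 : x * u < 2 * y := by
      apply lt_of_pow_lt_pow_left₀ 2 (by positivity)
      nlinarith
    have k5 : 4 * y / x < 1 - ‖w‖ := by rw [hs] at hws; linarith
    rw [div_lt_iff₀ hx0] at k5
    have k6 : 1 - ‖w‖ = u * (1 + ‖w‖) := by rw [hu]; field_simp
    have : u * (1 + ‖w‖) ≤ u * 2 := by gcongr; linarith
    nlinarith
  set Ψ := Function.invFunOn h (ball (0:ℂ) 1) with hΨd
  have hΨ : ∀ z ∈ ball (0:ℂ) 1, Ψ (h z) = z := fun z hz => hhbij.injOn.leftInvOn_invFunOn hz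
  have hΨV : ∀ v ∈ V, Ψ v ∈ ball (0:ℂ) 1 ∧ h (Ψ v) = v := by
    intro v hv
    obtain ⟨z, hz, rfl⟩ := hhbij.surjOn hv
    rw [hΨ z hz]; exact ⟨hz, rfl⟩
  have hΨdiff : ∀ v ∈ V, DifferentiableAt ℂ Ψ v := by
    intro v hv
    obtain ⟨z, hz, rfl⟩ := hhbij.surjOn hv
    exact aux_inv hhdiff hhbij.injOn hΨ hz
  have hΨ0 : Ψ 0 = 0 := by
    have := hΨ 0 h00; rwa [hh0] at this
  have hψd : ∀ z ∈ ball (0:ℂ) s, DifferentiableAt ℂ (Ψ ∘ g) z := fun z hz =>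
    (hΨdiff _ (hsub hz).2).comp z (hgdiff.differentiableAt (isOpen_ball.mem_nhds (hsub hz).1))
  have hsch := Complex.norm_deriv_le_div_of_mapsTo_ball (f := Ψ ∘ g) (c := 0) (R₁ := s) (R₂ := 1)
    (fun z hz => (hψd z hz).differentiableWithinAt) (fun z hz => by
      simp only [Function.comp_apply, hg0, hΨ0]
      exact ball_subset_closedBall (hΨV _ (hsub hz).2).1) hs0
  have h0s : (0:ℂ) ∈ ball (0:ℂ) s := by simp [hs0]
  have hchain : deriv g 0 = deriv h 0 * deriv (Ψ ∘ g) 0 := by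
    have h1 : HasDerivAt h (deriv h 0) ((Ψ ∘ g) 0) := by
      simp only [Function.comp_apply, hg0, hΨ0]
      exact (hhdiff.differentiableAt (isOpen_ball.mem_nhds h00)).hasDerivAt
    have h2 := h1.comp 0 (hψd 0 h0s).hasDerivAt
    have h3 : g =ᶠ[nhds 0] h ∘ (Ψ ∘ g) := by
      filter_upwards [isOpen_ball.mem_nhds h0s] with z hz
      exact (hΨV _ (hsub hz).2).2.symm
    exact (h2.congr_of_eventuallyEq h3).deriv
  have hfin : r ≤ ‖deriv h 0‖ * (1 / s) := by
    rw [hr, hchain, norm_mul]; gcongr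
  rw [mul_one_div, le_div_iff₀ hs0] at hfin
  linarith
end

section
/- Let U ⊆ ℂ be a bounded, open, connected, simply connected set with 0 ∈ U, and let V ⊆ U be an open, connected, simply connected set with 0 ∈ V. Let g : 𝔻 → U and h : 𝔻 → V be biholomorphisms from the open unit disk with g(0) = 0 and h(0) = 0. Let ρ_U = dist(0, ∂U) and ρ_V = dist(0, ∂V) be the distances from 0 to the frontiers of U and V, and let F(x) = 4x/(1+x)². Then |h′(0)| ≤ |g′(0)| · F(ρ_V/ρ_U). -/
open Metric

section KB
open MeasureTheory Set

lemma kb_circle_zero (H : ℂ → ℂ) (hH : DifferentiableOn ℂ H (ball 0 1)) (h0 : H 0 = 0) (r : ℝ)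
    (hr : 0 < r) (hr1 : r < 1) : ∫ θ in (-Real.pi)..Real.pi, H (circleMap 0 r θ) = 0 := by
  have h1 : DiffContOnCl ℂ H (ball 0 |r|) := by
    apply DifferentiableOn.diffContOnCl
    rw [abs_of_pos hr, closure_ball _ hr.ne']
    exact hH.mono (closedBall_subset_ball hr1)
  have h2 := h1.circleAverage
  rw [Real.circleAverage_def, h0] at h2
  have hp : Function.Periodic (fun θ => H (circleMap 0 r θ)) (2 * Real.pi) := by
    intro θ
    simp [periodic_circleMap 0 r θ]
  have h3 := hp.intervalIntegral_add_eq (-Real.pi) 0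
  rw [show -Real.pi + 2 * Real.pi = Real.pi by ring, zero_add] at h3
  rw [h3]
  have := smul_eq_zero.1 h2
  rcases this with h | h
  · exact absurd h (by positivity)
  · exact h

lemma kb_pointwise (b q z : ℂ) (r : ℝ) (hr : 0 < r) (hz : ‖z‖ = r) :
    (r^4)⁻¹ + ‖b‖^2 + (-2 * b * z^2 / (r:ℂ)^4 + 2 * (-z^2/(r:ℂ)^4 + (starRingEnd ℂ) b) * q).re
      ≤ ‖-(z^2)⁻¹ + b + q‖^2 := by
  have hz2 : z ≠ 0 := by rw [← norm_pos_iff, hz]; exact hr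
  set u := (z^2)⁻¹ with hu
  have h1 : z^2/(r:ℂ)^4 = (starRingEnd ℂ) u := by
    rw [hu, map_inv₀, div_eq_iff (by exact_mod_cast (pow_pos hr 4).ne'), eq_comm, inv_mul_eq_iff_eq_mul₀
      (by simpa using hz2), ← hz, map_pow, ← mul_pow, mul_comm, Complex.mul_conj, Complex.normSq_eq_norm_sq]
    push_cast; ring
  have h2 : (r^4)⁻¹ = ‖u‖^2 := by
    rw [hu, norm_inv, norm_pow, hz]; simp [← pow_mul]
  rw [h2, mul_div_assoc, neg_div, h1, Complex.sq_norm, Complex.sq_norm, Complex.sq_norm]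
  simp only [Complex.normSq_apply]
  simp
  nlinarith [sq_nonneg q.re, sq_nonneg q.im]

lemma kb_circle_lower (b : ℂ) (q : ℂ → ℂ) (hq : DifferentiableOn ℂ q (ball 0 1)) (hq0 : q 0 = 0)
    (r : ℝ) (hr : 0 < r) (hr1 : r < 1) :
    ENNReal.ofReal (2 * Real.pi * ((r^4)⁻¹ + ‖b‖^2)) ≤
      ∫⁻ θ in Ioo (-Real.pi) Real.pi,
        ENNReal.ofReal (‖-((circleMap 0 r θ)^2)⁻¹ + b + q (circleMap 0 r θ)‖^2) := by
  set H : ℂ → ℂ := fun z => -2 * b * z^2 / (r:ℂ)^4 + 2 * (-z^2/(r:ℂ)^4 + (starRingEnd ℂ) b) * q z with hHdef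
  have hH : DifferentiableOn ℂ H (ball 0 1) := by
    intro z hz
    have := hq z hz
    simp only [hHdef]
    fun_prop
  have hmem : ∀ θ, circleMap 0 r θ ∈ ball (0:ℂ) 1 := by
    intro θ; simp [abs_of_pos hr, hr1]
  have hne : ∀ θ, circleMap 0 r θ ≠ 0 := by
    intro θ; simp [hr.ne']
  have hHc : Continuous (fun θ => H (circleMap 0 r θ)) :=
    hH.continuousOn.comp_continuous (continuous_circleMap 0 r) hmem
  have hqc : Continuous (fun θ => q (circleMap 0 r θ)) :=
    hq.continuousOn.comp_continuous (continuous_circleMap 0 r) hmem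
  have hDc : Continuous (fun θ => ‖-((circleMap 0 r θ)^2)⁻¹ + b + q (circleMap 0 r θ)‖^2) := by
    have : Continuous (fun θ => ((circleMap 0 r θ)^2)⁻¹) :=
      ((continuous_circleMap 0 r).pow 2).inv₀ (fun θ => pow_ne_zero 2 (hne θ))
    exact ((this.neg.add continuous_const).add hqc).norm.pow 2
  have hpi : -Real.pi ≤ Real.pi := by linarith [Real.pi_pos]
  have hHre : IntervalIntegrable (fun θ => (H (circleMap 0 r θ)).re) volume (-Real.pi) Real.pi :=
    (Complex.continuous_re.comp hHc).intervalIntegrable _ _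
  rw [← ofReal_integral_eq_lintegral_ofReal]
  · apply ENNReal.ofReal_le_ofReal
    rw [← integral_Ioc_eq_integral_Ioo, ← intervalIntegral.integral_of_le hpi]
    have h1 : ∫ θ in (-Real.pi)..Real.pi, ((r^4)⁻¹ + ‖b‖^2 + (H (circleMap 0 r θ)).re) =
        2 * Real.pi * ((r^4)⁻¹ + ‖b‖^2) := by
      rw [intervalIntegral.integral_add (continuous_const.intervalIntegrable _ _) hHre]
      have : ∫ θ in (-Real.pi)..Real.pi, (H (circleMap 0 r θ)).re = 0 := by
        have h2 := kb_circle_zero H hH (by simp [hHdef, hq0]) r hr hr1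
        have h3 := Complex.reCLM.intervalIntegral_comp_comm (hHc.intervalIntegrable (μ := volume) (-Real.pi) Real.pi)
        simp only [Complex.reCLM_apply] at h3
        rw [h3, h2]; simp
      rw [this]
      simp
      ring
    rw [← h1]
    apply intervalIntegral.integral_mono hpi
    · exact (continuous_const.intervalIntegrable _ _).add hHre
    · exact hDc.intervalIntegrable _ _
    · intro θ
      exact kb_pointwise b _ _ r hr (by simp [abs_of_pos hr])
  · exact (hDc.integrableOn_Icc).mono_set Ioo_subset_Icc_self
  · exact Filter.Eventually.of_forall (fun θ => by positivity)

lemma kb_annulus_lower (b : ℂ) (q : ℂ → ℂ) (hq : DifferentiableOn ℂ q (ball 0 1)) (hq0 : q 0 = 0)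
    (D : ℂ → ℂ) (hD : Measurable D) (ε ρ : ℝ) (hε : 0 < ε) (hερ : ε < ρ) (hρ : ρ < 1)
    (hDq : ∀ z, ε < ‖z‖ → ‖z‖ < ρ → D z = -(z^2)⁻¹ + b + q z) :
    ENNReal.ofReal (Real.pi * ((ε^2)⁻¹ - (ρ^2)⁻¹ + ‖b‖^2 * (ρ^2 - ε^2))) ≤
      ∫⁻ z in {z : ℂ | ε < ‖z‖ ∧ ‖z‖ < ρ}, ENNReal.ofReal (‖D z‖^2) := by
  have hmeas : MeasurableSet {z : ℂ | ε < ‖z‖ ∧ ‖z‖ < ρ} :=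
    (measurableSet_lt measurable_const measurable_norm).inter (measurableSet_lt measurable_norm measurable_const)
  rw [← lintegral_indicator hmeas, ← Complex.lintegral_comp_polarCoord_symm]
  have hsub : Ioo ε ρ ×ˢ Ioo (-Real.pi) Real.pi ⊆ polarCoord.target := by
    rw [polarCoord_target]
    exact prod_mono (fun x hx => hε.trans hx.1) (subset_refl _)
  refine le_trans ?_ (lintegral_mono_set hsub)
  rw [Measure.volume_eq_prod, ← Measure.prod_restrict]
  have hpm : Measurable (fun p : ℝ × ℝ => (Complex.polarCoord.symm p : ℂ)) := by
    have : (fun p : ℝ × ℝ => (Complex.polarCoord.symm p : ℂ)) = fun p : ℝ × ℝ => (p.1 : ℂ) * (Real.cos p.2 + Real.sin p.2 * Complex.I) := by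
      ext p; rw [Complex.polarCoord_symm_apply]
    rw [this]
    fun_prop
  have hmi : Measurable (({z : ℂ | ε < ‖z‖ ∧ ‖z‖ < ρ}).indicator (fun z => ENNReal.ofReal (‖D z‖^2))) :=
    Measurable.indicator (by fun_prop) hmeas
  rw [lintegral_prod _ (by
    apply Measurable.aemeasurable
    simp only [smul_eq_mul]
    exact (by fun_prop : Measurable (fun p : ℝ × ℝ => ENNReal.ofReal p.1)).mul (hmi.comp hpm))]
  have hin : ∀ r ∈ Ioo ε ρ, ENNReal.ofReal (r * (2 * Real.pi * ((r^4)⁻¹ + ‖b‖^2))) ≤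
      ∫⁻ θ in Ioo (-Real.pi) Real.pi, ENNReal.ofReal r • ({z : ℂ | ε < ‖z‖ ∧ ‖z‖ < ρ}).indicator (fun z => ENNReal.ofReal (‖D z‖^2)) (Complex.polarCoord.symm (r, θ)) := by
    intro r hr
    have hr0 : 0 < r := hε.trans hr.1
    rw [ENNReal.ofReal_mul hr0.le]
    simp only [smul_eq_mul]
    have hm2 : Measurable (fun θ : ℝ => ({z : ℂ | ε < ‖z‖ ∧ ‖z‖ < ρ}).indicator
        (fun z => ENNReal.ofReal (‖D z‖^2)) (Complex.polarCoord.symm (r, θ))) :=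
      hmi.comp (hpm.comp (measurable_prodMk_left : Measurable (fun θ : ℝ => (r, θ))))
    rw [lintegral_const_mul _ hm2]
    gcongr
    refine (kb_circle_lower b q hq hq0 r hr0 (hr.2.trans hρ)).trans (le_of_eq ?_)
    apply lintegral_congr
    intro θ
    have hc : (Complex.polarCoord.symm (r, θ) : ℂ) = circleMap 0 r θ := by
      rw [Complex.polarCoord_symm_apply, circleMap_zero, Complex.exp_mul_I]; simp
    have hn : ‖circleMap 0 r θ‖ = r := by simp [abs_of_pos hr0]
    rw [hc, indicator_of_mem (by simp only [mem_ofPred_eq, hn]; exact hr), hDq _ (by rw [hn]; exact hr.1) (by rw [hn]; exact hr.2)]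
  refine le_trans ?_ (setLIntegral_mono' measurableSet_Ioo hin)
  have hci : ContinuousOn (fun r : ℝ => r * (2 * Real.pi * ((r^4)⁻¹ + ‖b‖^2))) (Icc ε ρ) := by
    intro r hr
    have : r^4 ≠ 0 := (pow_pos (hε.trans_le hr.1) 4).ne'
    apply ContinuousAt.continuousWithinAt
    fun_prop (disch := assumption)
  rw [← ofReal_integral_eq_lintegral_ofReal]
  · apply ENNReal.ofReal_le_ofReal
    rw [← integral_Ioc_eq_integral_Ioo, ← intervalIntegral.integral_of_le hερ.le]
    rw [intervalIntegral.integral_eq_sub_of_hasDerivAt (f := fun r => Real.pi * (-(r^2)⁻¹ + ‖b‖^2 * r^2))]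
    · apply le_of_eq; ring
    · intro r hr
      rw [uIcc_of_le hερ.le] at hr
      have hr0 : r ≠ 0 := (hε.trans_le hr.1).ne'
      have := (((hasDerivAt_pow 2 r).inv (pow_ne_zero 2 hr0)).neg.add ((hasDerivAt_pow 2 r).const_mul (‖b‖^2))).const_mul Real.pi
      refine this.congr_deriv ?_
      field_simp
      norm_num
      ring
    · apply ContinuousOn.intervalIntegrable; rwa [uIcc_of_le hερ.le]
  · exact (hci.integrableOn_Icc).mono_set Ioo_subset_Icc_self
  · filter_upwards [ae_restrict_mem measurableSet_Ioo] with r hr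
    have : 0 < r := hε.trans hr.1
    simp only [Pi.zero_apply]
    positivity
lemma kb_det_mul (a : ℂ) : ((ContinuousLinearMap.toSpanSingleton ℂ a).restrictScalars ℝ : ℂ →L[ℝ] ℂ).det = ‖a‖^2 := by
  rw [ContinuousLinearMap.det, ← LinearMap.det_toMatrix Complex.basisOneI, Matrix.det_fin_two]
  simp [LinearMap.toMatrix_apply, Complex.sq_norm, Complex.normSq_apply]

noncomputable def kb_skew (c : ℂ) : ℂ →L[ℝ] ℂ := ContinuousLinearMap.id ℝ ℂ - c • (Complex.conjCLE : ℂ →L[ℝ] ℂ)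
lemma kb_skew_apply (c w : ℂ) : kb_skew c w = w - c * (starRingEnd ℂ) w := by simp [kb_skew]
lemma kb_det_skew (c : ℂ) : (kb_skew c).det = 1 - ‖c‖^2 := by
  rw [ContinuousLinearMap.det, ← LinearMap.det_toMatrix Complex.basisOneI, Matrix.det_fin_two]
  simp [LinearMap.toMatrix_apply, Complex.sq_norm, Complex.normSq_apply, kb_skew_apply]
  ring

lemma kb_bound (b κ z : ℂ) (C ε : ℝ) (hC : ‖κ‖ ≤ C) (hε : 0 < ε) (hz : ε ≤ ‖z‖) (hz1 : ‖z‖ ≤ 1)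
    (hsm : ε * (2 * ‖b‖ + 3 * (C * (1 + ‖b‖))) ≤ 1) :
    ‖kb_skew (b * (ε:ℂ)^2) (z⁻¹ + b * z + z^3 * κ)‖ ≤ ε⁻¹ + (‖b‖^2 + C * (1 + ‖b‖)) * ε^2 := by
  set r := ‖z‖ with hr
  set B := ‖b‖ with hB
  have hr0 : 0 < r := hε.trans_le hz
  have hz0 : z ≠ 0 := by rw [← norm_pos_iff]; exact hr0
  have hε1 : ε ≤ 1 := hz.trans hz1
  have hB0 : 0 ≤ B := norm_nonneg _
  have hC0 : 0 ≤ C := (norm_nonneg _).trans hC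
  have hzc : (starRingEnd ℂ) z ≠ 0 := by simpa using hz0
  have hid : kb_skew (b * (ε:ℂ)^2) (z⁻¹ + b * z + z^3 * κ) =
      z⁻¹ + b * (((r^2 - ε^2 : ℝ) : ℂ) * ((starRingEnd ℂ) z)⁻¹)
        - b * (ε:ℂ)^2 * ((starRingEnd ℂ) b * (starRingEnd ℂ) z)
        + (z^3 * κ - b * (ε:ℂ)^2 * ((starRingEnd ℂ) z ^ 3 * (starRingEnd ℂ) κ)) := by
    have h2 : ((r^2 : ℝ) : ℂ) = z * (starRingEnd ℂ) z := by
      rw [Complex.mul_conj, Complex.normSq_eq_norm_sq]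
    rw [kb_skew_apply]
    simp only [map_add, map_mul, map_inv₀, map_pow, Complex.ofReal_sub]
    rw [h2]
    push_cast
    field_simp
    ring
  have hn : ‖kb_skew (b * (ε:ℂ)^2) (z⁻¹ + b * z + z^3 * κ)‖ ≤
      r⁻¹ + B * ((r^2 - ε^2) * r⁻¹) + B * ε^2 * (B * r) + (r^3 * C + B * ε^2 * (r^3 * C)) := by
    rw [hid]
    have hrr : 0 ≤ r^2 - ε^2 := by nlinarith
    refine (norm_add_le _ _).trans (add_le_add ((norm_sub_le _ _).trans (add_le_add ((norm_add_le _ _).trans (add_le_add ?_ ?_)) ?_)) ((norm_sub_le _ _).trans (add_le_add ?_ ?_)))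
    · simp [hr]
    · rw [norm_mul, norm_mul, Complex.norm_real, norm_inv, RCLike.norm_conj, Real.norm_of_nonneg hrr]
    · simp [hr, hB, abs_of_pos hε]
    · rw [norm_mul, norm_pow]; gcongr
    · simp only [norm_mul, norm_pow, RCLike.norm_conj, Complex.norm_real, Real.norm_of_nonneg hε.le]
      gcongr
  refine hn.trans ?_
  have e1 : r⁻¹ = ε⁻¹ - (r - ε) * (ε⁻¹ * r⁻¹) := by field_simp; ring
  set t := (r - ε) * (ε⁻¹ * r⁻¹) with ht
  have ht0 : 0 ≤ t := by have : 0 ≤ r - ε := by linarith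
                         positivity
  have hrt : r - ε = t * ε * r := by rw [ht]; field_simp
  have e2 : (r^2 - ε^2) * r⁻¹ ≤ t * (2 * ε) := by
    have : (r^2 - ε^2) * r⁻¹ = t * ε * (r + ε) := by
      rw [show r^2 - ε^2 = (r-ε) * (r+ε) by ring, hrt]; field_simp
    rw [this]
    have : t * ε * (r + ε) ≤ t * ε * 2 := by gcongr; linarith
    linarith
  have e3 : r^3 ≤ ε^3 + t * (3 * ε) := by
    have h1 : r^3 - ε^3 = t * ε * (r * (r^2 + r*ε + ε^2)) := by
      rw [show r^3 - ε^3 = (r-ε) * (r^2+r*ε+ε^2) by ring, hrt]; ring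
    have h2 : r * (r^2 + r*ε + ε^2) ≤ 1 * (1^2 + 1 * 1 + 1^2) := by gcongr
    have h3 : t * ε * (r * (r^2 + r*ε + ε^2)) ≤ t * ε * (1 * (1^2 + 1 * 1 + 1^2)) := by gcongr
    linarith
  have e4 : r^3 * C + B * ε^2 * (r^3 * C) ≤ C * (1 + B) * r^3 := by
    have : ε^2 ≤ 1 := by nlinarith
    have : B * ε^2 * (r^3 * C) ≤ B * 1 * (r^3 * C) := by gcongr
    linarith
  have e5 : C * (1+B) * r^3 ≤ C * (1+B) * (ε^3 + t * (3*ε)) := by gcongr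
  have e6 : B * ((r^2 - ε^2) * r⁻¹) ≤ B * (t * (2 * ε)) := by gcongr
  have e7 : B * ε^2 * (B * r) ≤ B * ε^2 * (B * 1) := by gcongr
  have e8 : t * (ε * (2 * B + 3 * (C * (1 + B)))) ≤ t * 1 := by gcongr
  have e9 : C * (1+B) * ε^3 ≤ C * (1+B) * ε^2 := by
    have : ε^3 ≤ ε^2 := by nlinarith [sq_nonneg ε]
    gcongr
  nlinarith only [e1, e4, e5, e6, e7, e8, e9]

lemma kb_area_eps (b : ℂ) (k : ℂ → ℂ) (hk : DifferentiableOn ℂ k (ball 0 1))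
    (hinj : InjOn (fun z => z⁻¹ + b * z + z^3 * k z) (ball 0 1 \ {0}))
    (ρ C ε : ℝ) (hρ : ρ < 1) (hC : ∀ z ∈ closedBall (0:ℂ) ρ, ‖k z‖ ≤ C) (hε : 0 < ε) (hερ : ε < ρ)
    (hsm : ε * (2 * ‖b‖ + 3 * (C * (1 + ‖b‖))) ≤ 1) (hsm2 : ‖b‖^2 * ε^4 < 1) :
    ((ε^2)⁻¹ - (ρ^2)⁻¹ + ‖b‖^2 * (ρ^2 - ε^2)) * (1 - ‖b‖^2 * ε^4) ≤
      (ε⁻¹ + (‖b‖^2 + C * (1 + ‖b‖)) * ε^2)^2 := by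
  set F : ℂ → ℂ := fun z => z⁻¹ + b * z + z^3 * k z with hF
  set A := {z : ℂ | ε < ‖z‖ ∧ ‖z‖ < ρ} with hA
  set q : ℂ → ℂ := fun z => 3 * z^2 * k z + z^3 * deriv k z with hqdef
  have hmeas : MeasurableSet A :=
    (measurableSet_lt measurable_const measurable_norm).inter (measurableSet_lt measurable_norm measurable_const)
  have hdk := hk.deriv isOpen_ball
  have hq : DifferentiableOn ℂ q (ball 0 1) := by
    intro z hz
    have h1 := hk z hz
    have h2 := hdk z hz
    simp only [hqdef]
    fun_prop
  have hderiv : ∀ z, ε < ‖z‖ → ‖z‖ < ρ → HasDerivAt F (-(z^2)⁻¹ + b + q z) z := by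
    intro z h1 h2
    have hz0 : z ≠ 0 := by rw [← norm_pos_iff]; linarith
    have hkz := (hk.differentiableAt (isOpen_ball.mem_nhds (by simp; linarith : z ∈ ball (0:ℂ) 1))).hasDerivAt
    refine (((hasDerivAt_inv hz0).add ((hasDerivAt_id z).const_mul b)).add ((hasDerivAt_pow 3 z).mul hkz)).congr_deriv ?_
    simp [hqdef]
  have hlow := kb_annulus_lower b q hq (by simp [hqdef]) (deriv F) (measurable_deriv F) ε ρ hε hερ hρ
    (fun z h1 h2 => (hderiv z h1 h2).deriv)
  have hAsub : A ⊆ ball 0 1 \ {0} := by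
    rintro z ⟨h1, h2⟩
    refine ⟨by simp; linarith, ?_⟩
    rintro rfl
    simp at h1; linarith
  have himg := lintegral_abs_det_fderiv_eq_addHaar_image volume (s := A) (f := F)
    (f' := fun z => (ContinuousLinearMap.toSpanSingleton ℂ (deriv F z)).restrictScalars ℝ) hmeas
    (fun z hz => by
      have h := hderiv z hz.1 hz.2
      rw [← h.deriv] at h
      exact (h.hasFDerivAt.restrictScalars ℝ).hasFDerivWithinAt) (hinj.mono hAsub)
  simp only [kb_det_mul, abs_pow, abs_norm] at himg
  rw [himg] at hlow
  set M := ε⁻¹ + (‖b‖^2 + C * (1 + ‖b‖)) * ε^2 with hM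
  have hsub : F '' A ⊆ kb_skew (b * (ε:ℂ)^2) ⁻¹' closedBall 0 M := by
    rintro _ ⟨z, hz, rfl⟩
    rw [mem_preimage, mem_closedBall_zero_iff]
    exact kb_bound b (k z) z C ε (hC z (by simpa using hz.2.le)) hε hz.1.le (hz.2.trans hρ).le hsm
  have hdet : (kb_skew (b * (ε:ℂ)^2)).det = 1 - ‖b‖^2 * ε^4 := by
    rw [kb_det_skew]; simp [mul_pow, ← pow_mul]
  have hdpos : 0 < 1 - ‖b‖^2 * ε^4 := by linarith
  have h3 := hlow.trans (measure_mono hsub)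
  rw [Measure.addHaar_preimage_continuousLinearMap _ (by
    change (kb_skew (b * (ε:ℂ)^2)).det ≠ 0
    rw [hdet]; exact hdpos.ne')] at h3
  change _ ≤ ENNReal.ofReal |((kb_skew (b * (ε:ℂ)^2)).det)⁻¹| * _ at h3
  have hC0 : 0 ≤ C := (norm_nonneg _).trans (hC 0 (by simp; linarith))
  have hM0 : 0 ≤ M := by positivity
  rw [hdet, abs_of_pos (inv_pos.2 hdpos), Complex.volume_closedBall, ← ENNReal.ofReal_pow hM0,
    show (NNReal.pi : ENNReal) = ENNReal.ofReal Real.pi by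
      rw [← NNReal.coe_real_pi, ENNReal.ofReal_coe_nnreal],
    ← ENNReal.ofReal_mul (by positivity), ← ENNReal.ofReal_mul (by positivity),
    ENNReal.ofReal_le_ofReal_iff (by positivity), inv_mul_eq_div, le_div_iff₀ hdpos] at h3
  have := Real.pi_pos
  nlinarith

lemma kb_area (b : ℂ) (k : ℂ → ℂ) (hk : DifferentiableOn ℂ k (ball 0 1))
    (hinj : InjOn (fun z => z⁻¹ + b * z + z^3 * k z) (ball 0 1 \ {0})) : ‖b‖ ≤ 1 := by
  have key : ∀ ρ : ℝ, 0 < ρ → ρ < 1 → ‖b‖^2 * ρ^2 ≤ (ρ^2)⁻¹ := by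
    intro ρ h0 h1
    obtain ⟨C, hC⟩ := (isCompact_closedBall (0:ℂ) ρ).exists_bound_of_continuousOn
      (hk.continuousOn.mono (closedBall_subset_ball h1))
    set B := ‖b‖ with hB
    set E := B^2 + C * (1 + B)
    have hf : ∀ᶠ ε in nhdsWithin (0:ℝ) (Ioi 0),
        - (ρ^2)⁻¹ + B^2 * (ρ^2 - ε^2) - (1 + ε^2 * (- (ρ^2)⁻¹ + B^2 * (ρ^2 - ε^2))) * B^2 * ε^2 ≤
          2 * E * ε + E^2 * ε^4 := by
      have t1 : ∀ᶠ ε in nhdsWithin (0:ℝ) (Ioi 0), ε < ρ :=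
        nhdsWithin_le_nhds (Iio_mem_nhds h0)
      have t2 : ∀ᶠ ε in nhdsWithin (0:ℝ) (Ioi 0), ε * (2 * B + 3 * (C * (1 + B))) < 1 := by
        apply nhdsWithin_le_nhds
        have : ContinuousAt (fun ε : ℝ => ε * (2 * B + 3 * (C * (1 + B)))) 0 := by fun_prop
        exact this.eventually_lt continuousAt_const (by simp)
      have t3 : ∀ᶠ ε in nhdsWithin (0:ℝ) (Ioi 0), B^2 * ε^4 < 1 := by
        apply nhdsWithin_le_nhds
        have : ContinuousAt (fun ε : ℝ => B^2 * ε^4) 0 := by fun_prop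
        exact this.eventually_lt continuousAt_const (by simp)
      filter_upwards [t1, t2, t3, self_mem_nhdsWithin] with ε e1 e2 e3 e4
      have e4 : 0 < ε := e4
      have := kb_area_eps b k hk hinj ρ C ε h1 hC e4 e1 e2.le e3
      have l : ((ε^2)⁻¹ - (ρ^2)⁻¹ + B^2 * (ρ^2 - ε^2)) * (1 - B^2 * ε^4) = (ε^2)⁻¹ + (- (ρ^2)⁻¹ + B^2 * (ρ^2 - ε^2) - (1 + ε^2 * (- (ρ^2)⁻¹ + B^2 * (ρ^2 - ε^2))) * B^2 * ε^2) := by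
        field_simp; ring
      have r : (ε⁻¹ + E * ε^2)^2 = (ε^2)⁻¹ + (2 * E * ε + E^2 * ε^4) := by
        field_simp; ring
      change _ ≤ (ε⁻¹ + E * ε^2)^2 at this
      rw [l, r] at this
      linarith
    have l1 : Filter.Tendsto (fun ε : ℝ => - (ρ^2)⁻¹ + B^2 * (ρ^2 - ε^2) - (1 + ε^2 * (- (ρ^2)⁻¹ + B^2 * (ρ^2 - ε^2))) * B^2 * ε^2) (nhdsWithin (0:ℝ) (Ioi 0)) (nhds (- (ρ^2)⁻¹ + B^2 * ρ^2)) := by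
      apply Filter.Tendsto.mono_left _ nhdsWithin_le_nhds
      have : Continuous (fun ε : ℝ => - (ρ^2)⁻¹ + B^2 * (ρ^2 - ε^2) - (1 + ε^2 * (- (ρ^2)⁻¹ + B^2 * (ρ^2 - ε^2))) * B^2 * ε^2) := by fun_prop
      simpa using this.tendsto 0
    have l2 : Filter.Tendsto (fun ε : ℝ => 2 * E * ε + E^2 * ε^4) (nhdsWithin (0:ℝ) (Ioi 0)) (nhds 0) := by
      apply Filter.Tendsto.mono_left _ nhdsWithin_le_nhds
      have : Continuous (fun ε : ℝ => 2 * E * ε + E^2 * ε^4) := by fun_prop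
      simpa using this.tendsto 0
    have := le_of_tendsto_of_tendsto l1 l2 hf
    linarith
  have hfin : ∀ᶠ ρ in nhdsWithin (1:ℝ) (Iio 1), ‖b‖^2 * ρ^2 ≤ (ρ^2)⁻¹ := by
    filter_upwards [nhdsWithin_le_nhds (Ioi_mem_nhds (show (0:ℝ) < 1 by norm_num)), self_mem_nhdsWithin] with ρ h1 h2
    exact key ρ h1 h2
  have l1 : Filter.Tendsto (fun ρ : ℝ => ‖b‖^2 * ρ^2) (nhdsWithin (1:ℝ) (Iio 1)) (nhds (‖b‖^2)) := by
    apply Filter.Tendsto.mono_left _ nhdsWithin_le_nhds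
    have : Continuous (fun ρ : ℝ => ‖b‖^2 * ρ^2) := by fun_prop
    simpa using this.tendsto 1
  have l2 : Filter.Tendsto (fun ρ : ℝ => (ρ^2)⁻¹) (nhdsWithin (1:ℝ) (Iio 1)) (nhds 1) := by
    apply Filter.Tendsto.mono_left _ nhdsWithin_le_nhds
    have : ContinuousAt (fun ρ : ℝ => (ρ^2)⁻¹) 1 := by fun_prop (disch := norm_num)
    simpa [ContinuousAt] using this
  have := le_of_tendsto_of_tendsto l1 l2 hfin
  nlinarith [norm_nonneg b]

lemma kb_sqrt (u : ℂ → ℂ) (hu : DifferentiableOn ℂ u (ball 0 1)) (hu0 : u 0 = 1)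
    (hne : ∀ z ∈ ball (0:ℂ) 1, u z ≠ 0) :
    ∃ v : ℂ → ℂ, DifferentiableOn ℂ v (ball 0 1) ∧ v 0 = 1 ∧ (∀ z, v z ≠ 0) ∧
      ∀ z ∈ ball (0:ℂ) 1, v z ^ 2 * u z = 1 := by
  have hd : DifferentiableOn ℂ (fun z => deriv u z / u z) (ball 0 1) :=
    (hu.deriv isOpen_ball).div hu hne
  obtain ⟨p, hp⟩ := hd.isExactOn_ball
  have h0 : (0:ℂ) ∈ ball (0:ℂ) 1 := by simp
  have hE : ∀ z ∈ ball (0:ℂ) 1, u z * Complex.exp (-(p z - p 0)) = 1 := by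
    have hder : ∀ z ∈ ball (0:ℂ) 1, HasDerivAt (fun z => u z * Complex.exp (-(p z - p 0))) 0 z := by
      intro z hz
      have h1 := (hu.differentiableAt (isOpen_ball.mem_nhds hz)).hasDerivAt
      have h2 := (((hp z hz).sub_const (p 0)).neg).cexp
      refine (h1.mul h2).congr_deriv ?_
      have := hne z hz
      field_simp
      ring
    intro z hz
    have := (convex_ball (0:ℂ) 1).is_const_of_fderivWithin_eq_zero (𝕜 := ℂ)
      (f := fun z => u z * Complex.exp (-(p z - p 0)))
      (fun z hz => (hder z hz).differentiableAt.differentiableWithinAt)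
      (fun z hz => by
        rw [fderivWithin_of_isOpen isOpen_ball hz, (hder z hz).hasFDerivAt.fderiv]; simp) hz h0
    simp only [hu0] at this
    simpa using this
  refine ⟨fun z => Complex.exp (-(p z - p 0) / 2), ?_, by simp, fun z => Complex.exp_ne_zero _, ?_⟩
  · intro z hz
    have := (hp z hz).differentiableAt.differentiableWithinAt (s := ball 0 1)
    fun_prop
  · intro z hz
    rw [← Complex.exp_nat_mul, mul_comm, ← hE z hz]
    congr 2
    push_cast
    ring

lemma kb_bieberbach (u : ℂ → ℂ) (hu : DifferentiableOn ℂ u (ball 0 1)) (hu0 : u 0 = 1)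
    (hinj : InjOn (fun z => z * u z) (ball 0 1)) : ‖deriv u 0‖ ≤ 2 := by
  have h0 : (0:ℂ) ∈ ball (0:ℂ) 1 := by simp
  have hn0 : ball (0:ℂ) 1 ∈ nhds 0 := isOpen_ball.mem_nhds h0
  have hne : ∀ z ∈ ball (0:ℂ) 1, u z ≠ 0 := by
    intro z hz h
    have : z = 0 := hinj hz h0 (by simp [h])
    rw [this, hu0] at h
    exact one_ne_zero h
  obtain ⟨v, hv, hv0, hvne, hvu⟩ := kb_sqrt u hu hu0 hne
  set b := deriv v 0 with hb
  have hub : deriv u 0 = -2 * b := by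
    have h1 := (hu.differentiableAt hn0).hasDerivAt
    have h2 := (hv.differentiableAt hn0).hasDerivAt
    have h3 := ((h2.pow 2).mul h1)
    have h4 : HasDerivAt (fun z => v z ^ 2 * u z) 0 0 := by
      refine (hasDerivAt_const (0:ℂ) (1:ℂ)).congr_of_eventuallyEq ?_
      filter_upwards [hn0] with z hz using hvu z hz
    have h5 := h3.unique h4
    simp [hv0, hu0] at h5
    linear_combination h5
  set k0 := dslope (dslope v 0) 0 with hk0
  have hk0d : DifferentiableOn ℂ k0 (ball 0 1) :=
    (Complex.differentiableOn_dslope hn0).2 ((Complex.differentiableOn_dslope hn0).2 hv)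
  have hvt : ∀ t, v t = 1 + b * t + t^2 * k0 t := by
    intro t
    have e1 := sub_smul_dslope v 0 t
    have e2 := sub_smul_dslope (dslope v 0) 0 t
    rw [dslope_same] at e2
    simp only [sub_zero, smul_eq_mul, hv0] at e1 e2
    linear_combination -e1 - t * e2
  have hsq : ∀ z ∈ ball (0:ℂ) 1, z^2 ∈ ball (0:ℂ) 1 := by
    intro z hz
    simp only [mem_ball_zero_iff, norm_pow] at hz ⊢
    nlinarith [norm_nonneg z]
  have hF : ∀ z : ℂ, z ≠ 0 → z⁻¹ + b * z + z^3 * k0 (z^2) = z⁻¹ * v (z^2) := by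
    intro z hz
    rw [hvt (z^2)]
    field_simp
  have hb1 : ‖b‖ ≤ 1 := by
    apply kb_area b (fun z => k0 (z^2))
    · exact hk0d.comp (by fun_prop) hsq
    · rintro z ⟨hz, hz0⟩ w ⟨hw, hw0⟩ hzw
      simp only [mem_singleton_iff] at hz0 hw0
      simp only at hzw
      rw [hF z hz0, hF w hw0] at hzw
      have h1 : z^2 = w^2 := by
        apply hinj (hsq z hz) (hsq w hw)
        have e := congrArg (fun x => x^2) hzw
        have ez := hvu _ (hsq z hz)
        have ew := hvu _ (hsq w hw)
        have uz := hne _ (hsq z hz)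
        have uw := hne _ (hsq w hw)
        have ez' : v (z^2) ^ 2 = (u (z^2))⁻¹ := eq_inv_of_mul_eq_one_left ez
        have ew' : v (w^2) ^ 2 = (u (w^2))⁻¹ := eq_inv_of_mul_eq_one_left ew
        simp only [mul_pow, ez', ew'] at e
        have := congrArg (fun x => x⁻¹) e
        simpa [mul_comm] using this
      rw [h1] at hzw
      have := mul_right_cancel₀ (hvne _) hzw
      exact inv_injective this
  rw [hub, norm_mul]
  simp
  linarith

lemma kb_quarter (f : ℂ → ℂ) (hf : DifferentiableOn ℂ f (ball 0 1)) (hinj : InjOn f (ball 0 1))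
    (hf0 : f 0 = 0) (w : ℂ) (hw : ∀ z ∈ ball (0:ℂ) 1, f z ≠ w) : ‖deriv f 0‖ ≤ 4 * ‖w‖ := by
  have h0 : (0:ℂ) ∈ ball (0:ℂ) 1 := by simp
  have hn0 : ball (0:ℂ) 1 ∈ nhds 0 := isOpen_ball.mem_nhds h0
  have hw0 : w ≠ 0 := by rintro rfl; exact hw 0 h0 hf0
  by_cases ha : deriv f 0 = 0
  · rw [ha]; simp
  set a := deriv f 0 with hadef
  set u : ℂ → ℂ := fun z => dslope f 0 z / a with hudef
  have hu : DifferentiableOn ℂ u (ball 0 1) :=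
    ((Complex.differentiableOn_dslope hn0).2 hf).div_const a
  have hu0 : u 0 = 1 := by simp [hudef, ← hadef, ha]
  have hfu : ∀ z, z * u z = f z / a := by
    intro z
    have e1 := sub_smul_dslope f 0 z
    simp only [sub_zero, smul_eq_mul, hf0] at e1
    simp only [hudef]
    rw [← e1]; ring
  have b1 : ‖deriv u 0‖ ≤ 2 := by
    apply kb_bieberbach u hu hu0
    intro x hx y hy hxy
    simp only [hfu] at hxy
    exact hinj hx hy ((div_left_inj' ha).1 hxy)
  have hwf : ∀ z ∈ ball (0:ℂ) 1, w - f z ≠ 0 := fun z hz h => hw z hz (sub_eq_zero.1 h).symm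
  set u2 : ℂ → ℂ := fun z => u z * (w / (w - f z)) with hu2def
  have b2 : ‖deriv u2 0‖ ≤ 2 := by
    apply kb_bieberbach u2
    · exact hu.mul ((differentiableOn_const w).div ((differentiableOn_const w).sub hf) hwf)
    · simp [hu2def, hu0, hf0, hw0]
    intro x hx y hy hxy
    simp only [hu2def, ← mul_assoc, hfu] at hxy
    apply hinj hx hy
    have h1 := hwf x hx
    have h2 := hwf y hy
    field_simp at hxy
    have : w * (f x - f y) = 0 := by linear_combination hxy
    exact sub_eq_zero.1 ((mul_eq_zero.1 this).resolve_left hw0)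
  have hd2 : deriv u2 0 = deriv u 0 + a / w := by
    have h1 := (hu.differentiableAt hn0).hasDerivAt
    have h2 := (hf.differentiableAt hn0).hasDerivAt
    have h3 := h1.mul ((hasDerivAt_const (0:ℂ) w).div (h2.const_sub w) (hwf 0 h0))
    have h4 : HasDerivAt u2 _ 0 := h3
    rw [h4.deriv]
    simp [hf0, hu0, ← hadef]
    field_simp
  have h3 : ‖a / w‖ ≤ 4 := by
    have : a / w = deriv u2 0 - deriv u 0 := by rw [hd2]; ring
    rw [this]
    exact (norm_sub_le _ _).trans (by linarith)
  rwa [norm_div, div_le_iff₀ (norm_pos_iff.2 hw0)] at h3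

lemma kb_pick (φ : ℂ → ℂ) (hφ : DifferentiableOn ℂ φ (ball 0 1)) (hinj : InjOn φ (ball 0 1))
    (hφ0 : φ 0 = 0) (hm : MapsTo φ (ball 0 1) (ball 0 1)) (w : ℂ) (hw1 : w ∈ ball (0:ℂ) 1)
    (hw : ∀ z ∈ ball (0:ℂ) 1, φ z ≠ w) : ‖deriv φ 0‖ ≤ 4 * (‖w‖ / (1 + ‖w‖)^2) := by
  have h0 : (0:ℂ) ∈ ball (0:ℂ) 1 := by simp
  have hn0 : ball (0:ℂ) 1 ∈ nhds 0 := isOpen_ball.mem_nhds h0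
  have hw0 : w ≠ 0 := by rintro rfl; exact hw 0 h0 hφ0
  have hwn : (‖w‖ : ℂ) ≠ 0 := by simpa using hw0
  set c : ℂ := -(starRingEnd ℂ) w / ‖w‖ with hc
  have hcn : ‖c‖ = 1 := by
    rw [hc, norm_div, norm_neg, RCLike.norm_conj, Complex.norm_real, norm_norm]
    exact div_self (norm_ne_zero_iff.2 hw0)
  have hcw : c * w = -‖w‖ := by
    rw [hc, div_mul_eq_mul_div, neg_mul, mul_comm, Complex.mul_conj, Complex.normSq_eq_norm_sq]
    push_cast
    field_simp
  have hd : ∀ z ∈ ball (0:ℂ) 1, 1 - c * z ≠ 0 := by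
    intro z hz h
    have h1 : c * z = 1 := (sub_eq_zero.1 h).symm
    have := congrArg norm h1
    rw [norm_mul, hcn, one_mul, norm_one] at this
    rw [mem_ball_zero_iff] at hz
    linarith
  set K : ℂ → ℂ := fun z => z / (1 - c * z)^2 with hK
  have hKinj : InjOn K (ball 0 1) := by
    intro x hx y hy hxy
    have h1 := hd x hx
    have h2 := hd y hy
    simp only [hK] at hxy
    rw [div_eq_div_iff (pow_ne_zero 2 h1) (pow_ne_zero 2 h2)] at hxy
    have h3 : (x - y) * (1 - c^2 * x * y) = 0 := by linear_combination hxy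
    rcases mul_eq_zero.1 h3 with h | h
    · exact sub_eq_zero.1 h
    · exfalso
      have h4 : c^2 * x * y = 1 := (sub_eq_zero.1 h).symm
      have := congrArg norm h4
      rw [norm_mul, norm_mul, norm_pow, hcn, one_pow, one_mul, norm_one] at this
      rw [mem_ball_zero_iff] at hx hy
      nlinarith [norm_nonneg x, norm_nonneg y]
  have hKd : DifferentiableOn ℂ K (ball 0 1) := by
    apply DifferentiableOn.div (by fun_prop) (by fun_prop)
    exact fun z hz => pow_ne_zero 2 (hd z hz)
  have hKd0 : HasDerivAt K 1 0 := by
    have h1 := (hasDerivAt_id (0:ℂ)).div ((((hasDerivAt_id (0:ℂ)).const_mul c).const_sub 1).pow 2) (by simp)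
    refine h1.congr_deriv ?_
    simp
  have hq := kb_quarter (K ∘ φ) (hKd.comp hφ hm) (hKinj.comp hinj hm) (by simp [hK, hφ0]) (K w)
    (fun z hz h => hw z hz (hKinj (hm hz) hw1 h))
  have hder : deriv (K ∘ φ) 0 = deriv φ 0 := by
    have h1 := (hφ.differentiableAt hn0).hasDerivAt
    have h2 : HasDerivAt K 1 (φ 0) := by rw [hφ0]; exact hKd0
    rw [(h2.comp 0 h1).deriv, one_mul]
  have hKw : ‖K w‖ = ‖w‖ / (1 + ‖w‖)^2 := by
    have : (1:ℂ) - c * w = ((1 + ‖w‖ : ℝ) : ℂ) := by rw [hcw]; push_cast; ring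
    simp only [hK]
    rw [this, norm_div, norm_pow, Complex.norm_real, Real.norm_of_nonneg (by positivity)]
  rwa [hder, hKw] at hq

lemma kb_inverse (g : ℂ → ℂ) (U : Set ℂ) (hg : DifferentiableOn ℂ g (ball 0 1))
    (hbij : BijOn g (ball 0 1) U) (hU : IsOpen U) :
    ∃ G : ℂ → ℂ, DifferentiableOn ℂ G U ∧ MapsTo G U (ball 0 1) ∧ (∀ z ∈ ball (0:ℂ) 1, G (g z) = z) ∧
      ∀ w ∈ U, g (G w) = w := by
  set G := Function.invFunOn g (ball 0 1) with hG
  have hinv : InvOn G g (ball 0 1) U := hbij.invOn_invFunOn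
  have hGm : MapsTo G U (ball 0 1) := hbij.surjOn.mapsTo_invFunOn
  have han : AnalyticOnNhd ℂ g (ball 0 1) := hg.analyticOnNhd isOpen_ball
  have hpc : IsPreconnected (ball (0:ℂ) 1) := (convex_ball (0:ℂ) 1).isPreconnected
  have h0 : (0:ℂ) ∈ ball (0:ℂ) 1 := by simp
  have h2 : (1/2:ℂ) ∈ ball (0:ℂ) 1 := by simp; norm_num
  have hnc : ¬ ∃ w, ∀ z ∈ ball (0:ℂ) 1, g z = w := by
    rintro ⟨w, hw⟩
    have := hbij.injOn h0 h2 (by rw [hw _ h0, hw _ h2])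
    norm_num at this
  have hop := (han.is_constant_or_isOpen hpc).resolve_left hnc
  have hGc : ∀ w ∈ U, ContinuousAt G w := by
    intro w hw
    rw [continuousAt_def]
    intro A hA
    have hA2 : A ∩ ball 0 1 ∈ nhds (G w) := Filter.inter_mem hA (isOpen_ball.mem_nhds (hGm hw))
    obtain ⟨t, ht, hto, hwt⟩ := _root_.mem_nhds_iff.1 hA2
    have ho := hop t (fun x hx => (ht hx).2) hto
    refine Filter.mem_of_superset (ho.mem_nhds ⟨G w, hwt, hinv.2 hw⟩) ?_
    rintro _ ⟨x, hx, rfl⟩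
    rw [mem_preimage, hinv.1 (ht hx).2]
    exact (ht hx).1
  have hdne : ∀ w ∈ U, deriv g (G w) ≠ 0 → DifferentiableAt ℂ G w := by
    intro w hw h
    refine (HasDerivAt.of_local_left_inverse (hGc w hw)
      (hg.differentiableAt (isOpen_ball.mem_nhds (hGm hw))).hasDerivAt h ?_).differentiableAt
    filter_upwards [hU.mem_nhds hw] with y hy using hinv.2 hy
  refine ⟨G, ?_, hGm, fun z hz => hinv.1 hz, fun w hw => hinv.2 hw⟩
  intro w hw
  apply DifferentiableAt.differentiableWithinAt
  apply AnalyticAt.differentiableAt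
  apply Complex.analyticAt_of_differentiable_on_punctured_nhds_of_continuousAt _ (hGc w hw)
  have hdan : AnalyticOnNhd ℂ (deriv g) (ball 0 1) := han.deriv
  rcases (hdan _ (hGm hw)).eventually_eq_zero_or_eventually_ne_zero with h | h
  · exfalso
    apply hnc
    have hz := hdan.eqOn_zero_of_preconnected_of_eventuallyEq_zero hpc (hGm hw) h
    refine ⟨g 0, fun z hz' => ?_⟩
    exact (convex_ball (0:ℂ) 1).is_const_of_fderivWithin_eq_zero (𝕜 := ℂ) hg
      (fun z hz1 => by
        rw [fderivWithin_of_isOpen isOpen_ball hz1]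
        ext
        simpa using hz hz1) hz' h0
  · have ht : Filter.Tendsto G (nhdsWithin w {w}ᶜ) (nhdsWithin (G w) {G w}ᶜ) := by
      apply tendsto_nhdsWithin_of_tendsto_nhds_of_eventually_within
      · exact (hGc w hw).tendsto.mono_left nhdsWithin_le_nhds
      · filter_upwards [self_mem_nhdsWithin, nhdsWithin_le_nhds (hU.mem_nhds hw)] with y hy hyU
        intro he
        apply hy
        have he : G y = G w := he
        have := congrArg g he
        rwa [hinv.2 hyU, hinv.2 hw] at this
    filter_upwards [ht.eventually h, nhdsWithin_le_nhds (hU.mem_nhds hw)] with y hy hyU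
    exact hdne y hyU hy

lemma kb_frontier (U : Set ℂ) (hb : Bornology.IsBounded U) (ho : IsOpen U) (h0 : (0:ℂ) ∈ U) :
    0 < infDist 0 (frontier U) ∧ ball 0 (infDist 0 (frontier U)) ⊆ U ∧
      ∃ p ∈ frontier U, p ∉ U ∧ ‖p‖ = infDist 0 (frontier U) := by
  have hne : (frontier U).Nonempty := by
    rw [nonempty_frontier_iff]
    refine ⟨⟨0, h0⟩, fun h1 => ?_⟩
    rw [h1] at hb
    exact NormedSpace.unbounded_univ ℂ ℂ hb
  have hnot : ∀ p ∈ frontier U, p ∉ U := by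
    intro p hp
    rw [ho.frontier_eq] at hp
    exact hp.2
  obtain ⟨p, hp, hpd⟩ := isClosed_frontier.exists_infDist_eq_dist hne (0:ℂ)
  refine ⟨(isClosed_frontier.notMem_iff_infDist_pos hne).1 (fun h => hnot 0 h h0), ?_,
    p, hp, hnot p hp, by rw [hpd, dist_zero_left]⟩
  set R := infDist (0:ℂ) (frontier U)
  have hd : ball (0:ℂ) R ∩ frontier U = ∅ := by
    ext x
    simp only [mem_inter_iff, mem_ball, mem_empty_iff_false, iff_false, not_and]
    intro hx hxf
    have := infDist_le_dist_of_mem (x := (0:ℂ)) hxf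
    rw [dist_comm] at this
    linarith
  have hR : 0 < R := (isClosed_frontier.notMem_iff_infDist_pos hne).1 (fun h => hnot 0 h h0)
  refine IsPreconnected.subset_left_of_subset_union ho (isClosed_closure (s := U)).isOpen_compl ?_ ?_ ?_
    (convex_ball (0:ℂ) R).isPreconnected
  · exact disjoint_compl_right.mono_left subset_closure
  · intro x hx
    by_cases hxU : x ∈ U
    · exact Or.inl hxU
    · right
      intro hxc
      have : x ∈ ball (0:ℂ) R ∩ frontier U := ⟨hx, by rw [ho.frontier_eq]; exact ⟨hxc, hxU⟩⟩
      rw [hd] at this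
      exact this
  · exact ⟨0, by simpa using hR, h0⟩


end KB


/-- if `V ⊆ U` are bounded simply connected domains containing
`0`, then with `F(x) = 4x/(1+x)²`, the conformal radii satisfy
`r(V,0) ≤ r(U,0)·F(ρ(V,0)/ρ(U,0))`, where `ρ` denotes the inner radius. -/
theorem conformal_radius_inner_radius_bound
    (U V : Set ℂ)
    (hUbd : Bornology.IsBounded U) (hUopen : IsOpen U) (hUconn : IsConnected U)
    (hUsc : SimplyConnectedSpace U) (hU0 : (0 : ℂ) ∈ U)
    (hVU : V ⊆ U) (hVopen : IsOpen V) (hVconn : IsConnected V)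
    (hVsc : SimplyConnectedSpace V) (hV0 : (0 : ℂ) ∈ V)
    (g h : ℂ → ℂ)
    (hgdiff : DifferentiableOn ℂ g (ball (0 : ℂ) 1))
    (hgbij : Set.BijOn g (ball (0 : ℂ) 1) U) (hg0 : g 0 = 0)
    (hhdiff : DifferentiableOn ℂ h (ball (0 : ℂ) 1))
    (hhbij : Set.BijOn h (ball (0 : ℂ) 1) V) (hh0 : h 0 = 0)
    (ρU ρV : ℝ) (hρU : ρU = infDist 0 (frontier U)) (hρV : ρV = infDist 0 (frontier V))
    (F : ℝ → ℝ) (hF : ∀ x, F x = 4 * x / (1 + x) ^ 2) :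
    ‖deriv h 0‖ ≤ ‖deriv g 0‖ * F (ρV / ρU) := by
  obtain ⟨hU, hUb, q, hq, hqU, hqn⟩ := kb_frontier U hUbd hUopen hU0
  obtain ⟨hV, hVb, p, hp, hpV, hpn⟩ := kb_frontier V (hUbd.subset hVU) hVopen hV0
  rw [← hρU] at hU hUb hqn
  rw [← hρV] at hV hVb hpn
  have h0 : (0:ℂ) ∈ ball (0:ℂ) 1 := by simp
  have hn0 : ball (0:ℂ) 1 ∈ nhds 0 := isOpen_ball.mem_nhds h0
  have hle : ρV ≤ ρU := by
    by_contra hlt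
    push Not at hlt
    exact hqU (hVU (hVb (by rw [mem_ball_zero_iff, hqn]; exact hlt)))
  obtain ⟨G, hGd, hGm, hGg, hgG⟩ := kb_inverse g U hgdiff hgbij hUopen
  have hhU : Set.MapsTo h (ball 0 1) U := fun z hz => hVU (hhbij.mapsTo hz)
  have hG0 : G 0 = 0 := by have := hGg 0 h0; rwa [hg0] at this
  set φ : ℂ → ℂ := G ∘ h with hφ
  have hφd : DifferentiableOn ℂ φ (ball 0 1) := hGd.comp hhdiff hhU
  have hφm : Set.MapsTo φ (ball 0 1) (ball 0 1) := hGm.comp hhU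
  have hφ0 : φ 0 = 0 := by simp [hφ, hh0, hG0]
  have hgφ : ∀ z ∈ ball (0:ℂ) 1, g (φ z) = h z := fun z hz => hgG _ (hhU hz)
  have hφi : Set.InjOn φ (ball 0 1) := by
    intro x hx y hy hxy
    apply hhbij.injOn hx hy
    rw [← hgφ x hx, ← hgφ y hy, hxy]
  have hder : deriv h 0 = deriv g 0 * deriv φ 0 := by
    have h1 := (hφd.differentiableAt hn0).hasDerivAt
    have h2 : HasDerivAt g (deriv g 0) (φ 0) := by
      rw [hφ0]; exact (hgdiff.differentiableAt hn0).hasDerivAt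
    have h3 := h2.comp 0 h1
    have h4 : HasDerivAt h (deriv g 0 * deriv φ 0) 0 := by
      refine h3.congr_of_eventuallyEq ?_
      filter_upwards [hn0] with z hz using (hgφ z hz).symm
    exact h4.deriv
  rw [hder, norm_mul, hF]
  gcongr
  rcases hle.lt_or_eq with hlt | heq
  · have hpU : p ∈ ball (0:ℂ) ρU := by rw [mem_ball_zero_iff, hpn]; exact hlt
    have hpick := kb_pick φ hφd hφi hφ0 hφm (G p) (hGm (hUb hpU)) (by
      intro z hz he
      apply hpV
      rw [← hgG p (hUb hpU), ← he, hgφ z hz]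
      exact hhbij.mapsTo hz)
    have hsch := Complex.dist_le_div_mul_dist_of_mapsTo_ball (f := G) (c := 0) (R₁ := ρU) (R₂ := 1) (z := p)
      (hGd.mono hUb) (by
        rw [hG0]
        exact fun z hz => ball_subset_closedBall (hGm (hUb hz))) hpU
    rw [hG0, dist_zero_right, dist_zero_right, hpn] at hsch
    have ht : ‖G p‖ ≤ ρV / ρU := by
      calc _ ≤ _ := hsch
        _ = _ := by ring
    have hx1 : ρV / ρU ≤ 1 := (div_le_one hU).2 hle
    set x := ρV / ρU
    set t := ‖G p‖
    have ht0 : 0 ≤ t := norm_nonneg _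
    have hx0 : 0 ≤ x := ht0.trans ht
    refine hpick.trans ?_
    rw [← mul_div_assoc, div_le_div_iff₀ (by positivity) (by positivity)]
    have : t * x ≤ 1 := by nlinarith
    nlinarith [mul_nonneg (sub_nonneg.2 ht) (sub_nonneg.2 this)]
  · rw [heq, div_self hU.ne']
    have := Complex.norm_deriv_le_one_of_mapsTo_ball hφd (by
      rw [hφ0]; exact fun z hz => ball_subset_closedBall (hφm hz)) one_pos
    norm_num
    exact this
end

section
/- For each n let U_n ⊊ ℂ be an open, connected, simply connected set with marked point u_n ∈ U_n, and let U ⊊ ℂ be an open, connected, simply connected set with marked point u ∈ U. Let φ_n : 𝔻 → U_n and φ : 𝔻 → U be the biholomorphisms from the open unit disk with φ_n(0) = u_n, φ(0) = u, and with derivatives φ_n′(0) and φ′(0) real and strictly positive. Then the following are equivalent: (1) (U_n, u_n) converges to (U, u) in the kernel (Carathéodory) sense, i.e. u_n → u, for every compact K ⊆ U one has K ⊆ U_n for all sufficiently large n, and for every open connected set W with u ∈ W, if W ⊆ U_n for infinitely many n then W ⊆ U; (2) φ_n converges to φ uniformly on every compact subset of 𝔻. -/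
open Metric Filter


theorem ck_log (g : ℂ → ℂ) (hg : DifferentiableOn ℂ g (ball 0 1)) (h0 : ∀ z ∈ ball (0:ℂ) 1, g z ≠ 0) :
    ∃ L : ℂ → ℂ, DifferentiableOn ℂ L (ball 0 1) ∧ ∀ z ∈ ball (0:ℂ) 1, Complex.exp (L z) = g z := by
  have hd : DifferentiableOn ℂ (fun z => deriv g z / g z) (ball 0 1) :=
    (hg.deriv isOpen_ball).div hg h0
  obtain ⟨L, hL0, hL⟩ := hd.isExactOn_ball.with_val_at 0 (Complex.log (g 0))
  have hm : (0:ℂ) ∈ ball (0:ℂ) 1 := by simp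
  refine ⟨L, fun z hz => (hL z hz).differentiableAt.differentiableWithinAt, fun z hz => ?_⟩
  have key : ∀ w ∈ ball (0:ℂ) 1, HasDerivAt (fun w => Complex.exp (-L w) * g w) 0 w := by
    intro w hw
    have h1 := ((hL w hw).neg.cexp).mul ((hg.differentiableAt (isOpen_ball.mem_nhds hw)).hasDerivAt)
    refine h1.congr_deriv ?_
    have := h0 w hw
    field_simp
    ring
  have := (convex_ball (0:ℂ) 1).is_const_of_fderivWithin_eq_zero (𝕜 := ℂ)
    (f := fun w => Complex.exp (-L w) * g w)
    (fun w hw => (key w hw).differentiableAt.differentiableWithinAt)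
    (fun w hw => by
      rw [fderivWithin_of_isOpen isOpen_ball hw]
      ext; simp [(key w hw).deriv]) hz hm
  simp only [hL0] at this
  rw [Complex.exp_neg, Complex.exp_neg, Complex.exp_log (h0 0 hm), inv_mul_cancel₀ (h0 0 hm)] at this
  field_simp at this
  exact this.symm

theorem ck_bc (F : ℂ → ℂ) (c w : ℂ) (R : ℝ) (hR : 0 < R) (hF : DifferentiableOn ℂ F (ball c R))
    (hb : ∀ z ∈ ball c R, ‖F z‖ < 1) (hw : dist w c ≤ R / 5) : ‖F w‖ ≤ (1 + ‖F c‖) / 2 := by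
  obtain ⟨e, he, hew⟩ : ∃ e : ℂ, ‖e‖ = 1 ∧ e * F w = (‖F w‖ : ℂ) := by
    by_cases h : F w = 0
    · exact ⟨1, by simp, by simp [h]⟩
    · refine ⟨(‖F w‖ : ℂ) / F w, by simp [h], by field_simp⟩
  have hc : c ∈ ball c R := mem_ball_self hR
  have hre : (e * F c).re ≤ ‖F c‖ := by
    calc _ ≤ ‖e * F c‖ := Complex.re_le_norm _
      _ = _ := by simp [he]
  have hM : 0 < 1 - (e * F c).re := by have := hb c hc; linarith
  have hmap : Set.MapsTo (fun z => z + c) (ball 0 R) (ball c R) := by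
    intro z hz; simpa [dist_eq_norm] using hz
  have := Complex.borelCaratheodory_zero (f := fun z => e * (F (z + c) - F c)) (z := w - c) hM
    (R := R) ?_ ?_ hR ?_ ?_
  · have hn : ‖w - c‖ ≤ R / 5 := by simpa [dist_eq_norm] using hw
    have h1 : 2 * (1 - (e * F c).re) * ‖w - c‖ / (R - ‖w - c‖) ≤ (1 - (e * F c).re) / 2 := by
      rw [div_le_iff₀ (by linarith)]
      nlinarith
    have h2 := (Complex.re_le_norm _).trans (this.trans h1)
    simp only [sub_add_cancel, mul_sub, hew, Complex.sub_re, Complex.ofReal_re] at h2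
    linarith
  · exact ((hF.comp (by fun_prop) hmap).sub_const _).const_mul _
  · intro z hz
    have h1 : (e * F (z + c)).re ≤ 1 := by
      calc _ ≤ ‖e * F (z + c)‖ := Complex.re_le_norm _
        _ ≤ _ := by rw [norm_mul, he, one_mul]; exact (hb _ (hmap hz)).le
    simp only [mul_sub, Complex.sub_re, Set.mem_ofPred_eq]
    linarith
  · have : dist w c < R := by linarith
    simpa [dist_eq_norm] using this
  · simp

theorem ck_hurwitz (l : Filter ℕ) (F : ℕ → ℂ → ℂ) (f : ℂ → ℂ) (z₀ : ℂ) (ρ : ℝ) (hρ : 0 < ρ)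
    (hsub : closedBall z₀ ρ ⊆ ball (0:ℂ) 1)
    (hF : ∀ n, DifferentiableOn ℂ (F n) (ball 0 1)) (hi : ∀ n, Set.InjOn (F n) (ball 0 1))
    (hf : DifferentiableOn ℂ f (ball 0 1)) (hnc : ∀ᶠ z in nhdsWithin z₀ {z₀}ᶜ, f z ≠ f z₀)
    (hlim : TendstoLocallyUniformlyOn F f l (ball 0 1)) :
    ∃ δ > 0, ∀ᶠ n in l, ball (f z₀) δ ⊆ F n '' closedBall z₀ ρ := by
  obtain ⟨r, hr, hrs⟩ : ∃ r > 0, ∀ z, dist z z₀ < r → z ≠ z₀ → f z ≠ f z₀ := by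
    rw [eventually_nhdsWithin_iff, Metric.eventually_nhds_iff] at hnc
    obtain ⟨r, hr, h⟩ := hnc
    exact ⟨r, hr, fun z hz hne => h hz hne⟩
  set s := min (r / 2) ρ with hs
  have hs0 : 0 < s := by positivity
  have hsr : s < r := (min_le_left _ _).trans_lt (by linarith)
  have hsub' : closedBall z₀ s ⊆ ball (0:ℂ) 1 := (closedBall_subset_closedBall (min_le_right _ _)).trans hsub
  have hz0 : z₀ ∈ closedBall z₀ s := mem_closedBall_self hs0.le
  obtain ⟨m, hm, hms⟩ : ∃ m > 0, ∀ z ∈ sphere z₀ s, m ≤ ‖f z - f z₀‖ := by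
    obtain ⟨x, hx, hmin⟩ := (isCompact_sphere z₀ s).exists_isMinOn
      (NormedSpace.sphere_nonempty.2 hs0.le)
      (f := fun z => ‖f z - f z₀‖)
      (((hf.continuousOn.mono (sphere_subset_closedBall.trans hsub')).sub continuousOn_const).norm)
    refine ⟨_, ?_, fun z hz => hmin hz⟩
    rw [gt_iff_lt, norm_pos_iff, sub_ne_zero]
    refine hrs x (by rw [mem_sphere.1 hx]; exact hsr) ?_
    rintro rfl
    simp at hx; linarith
  have hu := (tendstoLocallyUniformlyOn_iff_forall_isCompact isOpen_ball).1 hlim _ hsub' (isCompact_closedBall _ _)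
  rw [Metric.tendstoUniformlyOn_iff] at hu
  refine ⟨m / 4, by positivity, ?_⟩
  filter_upwards [hu (m / 8) (by positivity)] with n hn
  have h0 := hn z₀ hz0
  have hd : DiffContOnCl ℂ (F n) (ball z₀ s) := by
    apply DifferentiableOn.diffContOnCl
    rw [closure_ball _ hs0.ne']
    exact (hF n).mono hsub'
  have := hd.ball_subset_image_closedBall hs0 (ε := 3 * m / 4) ?_ ?_
  · refine (Set.Subset.trans ?_ this).trans (Set.image_mono (closedBall_subset_closedBall (min_le_right _ _)))
    apply ball_subset_ball'
    linarith
  · intro z hz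
    have h1 := hn z (sphere_subset_closedBall hz)
    have h2 := hms z hz
    rw [← dist_eq_norm] at h2 ⊢
    have := dist_triangle4 (f z) (F n z) (F n z₀) (f z₀)
    rw [dist_comm (F n z₀)] at this
    linarith
  · have : ∀ᶠ z in nhdsWithin z₀ {z₀}ᶜ, F n z ≠ F n z₀ := by
      filter_upwards [self_mem_nhdsWithin, mem_nhdsWithin_of_mem_nhds (isOpen_ball.mem_nhds (hsub' hz0))] with z hz hz2 h
      exact hz (hi n hz2 (hsub' hz0) h)
    exact this.frequently.filter_mono nhdsWithin_le_nhds

theorem ck_compact (l : Filter ℕ) (F : ℕ → ℂ → ℂ) (f : ℂ → ℂ)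
    (hF : ∀ n, DifferentiableOn ℂ (F n) (ball 0 1)) (hi : ∀ n, Set.InjOn (F n) (ball 0 1))
    (hf : DifferentiableOn ℂ f (ball 0 1))
    (hnc : ∀ z₀ ∈ ball (0:ℂ) 1, ∀ᶠ z in nhdsWithin z₀ {z₀}ᶜ, f z ≠ f z₀)
    (hlim : TendstoLocallyUniformlyOn F f l (ball 0 1)) (K : Set ℂ) (hK : IsCompact K)
    (hKf : K ⊆ f '' ball 0 1) :
    ∀ᶠ n in l, K ⊆ F n '' ball 0 1 := by
  refine hK.induction_on (p := fun K => ∀ᶠ n in l, K ⊆ F n '' ball 0 1) (by simp)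
    (fun s t hst h => h.mono fun n hn => hst.trans hn)
    (fun s t h1 h2 => by filter_upwards [h1, h2] with n a b using Set.union_subset a b) ?_
  intro x hx
  obtain ⟨z, hz, rfl⟩ := hKf hx
  obtain ⟨ρ, hρ, hs⟩ := (nhds_basis_closedBall.mem_iff).1 (isOpen_ball.mem_nhds hz)
  obtain ⟨δ, hδ, h⟩ := ck_hurwitz l F f z ρ hρ hs hF hi hf (hnc z hz) hlim
  exact ⟨_, mem_nhdsWithin_of_mem_nhds (ball_mem_nhds _ hδ), h.mono fun n hn => hn.trans (Set.image_mono hs)⟩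

theorem ck_montel (l : Ultrafilter ℕ) (F : ℕ → ℂ → ℂ)
    (hF : ∀ n, DifferentiableOn ℂ (F n) (ball 0 1))
    (hb : ∀ r < (1:ℝ), ∃ C, ∀ᶠ n in (l : Filter ℕ), ∀ z ∈ closedBall (0:ℂ) r, ‖F n z‖ ≤ C) :
    ∃ f : ℂ → ℂ, TendstoLocallyUniformlyOn F f l (ball 0 1) := by
  have h1 : ∀ z ∈ ball (0:ℂ) 1, ∃ y, Tendsto (fun n => F n z) l (nhds y) := by
    intro z hz
    obtain ⟨C, hC⟩ := hb ‖z‖ (by simpa using hz)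
    obtain ⟨y, -, hy⟩ := (isCompact_closedBall (0:ℂ) C).ultrafilter_le_nhds' (l.map fun n => F n z) (by
      show ∀ᶠ n in (l : Filter ℕ), F n z ∈ closedBall (0:ℂ) C
      filter_upwards [hC] with n hn
      simpa using hn z (by simp))
    exact ⟨y, hy⟩
  choose! f hf using h1
  refine ⟨f, ?_⟩
  rw [Metric.tendstoLocallyUniformlyOn_iff]
  intro ε hε z hz
  have hz1 : ‖z‖ < 1 := by simpa using hz
  set ρ := (1 - ‖z‖) / 2 with hρ
  have hρ0 : 0 < ρ := by linarith
  obtain ⟨C, hC⟩ := hb (‖z‖ + ρ) (by linarith)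
  have hsub : ∀ w ∈ ball z ρ, w ∈ closedBall (0:ℂ) (‖z‖ + ρ) := by
    intro w hw
    rw [mem_ball, dist_eq_norm] at hw
    have := norm_add_le z (w - z)
    simp at this ⊢; linarith
  have hsub2 : ∀ w ∈ ball z ρ, w ∈ ball (0:ℂ) 1 := by
    intro w hw
    have := hsub w hw
    simp at this ⊢; linarith
  have hC0 : 0 ≤ C := by
    obtain ⟨n, hn⟩ := hC.exists
    exact (norm_nonneg _).trans (hn z (hsub z (mem_ball_self hρ0)))
  have hlip : ∀ᶠ n in (l : Filter ℕ), ∀ w ∈ ball z ρ, dist (F n w) (F n z) ≤ 2 * C / ρ * dist w z := by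
    filter_upwards [hC] with n hn w hw
    refine Complex.dist_le_div_mul_dist_of_mapsTo_ball ((hF n).mono hsub2) ?_ hw
    intro x hx
    rw [mem_closedBall, dist_eq_norm]
    have := norm_sub_le (F n x) (F n z)
    have := hn x (hsub x hx)
    have := hn z (hsub z (mem_ball_self hρ0))
    linarith
  have hlipf : ∀ w ∈ ball z ρ, dist (f w) (f z) ≤ 2 * C / ρ * dist w z := by
    intro w hw
    exact le_of_tendsto ((hf w (hsub2 w hw)).dist (hf z hz)) (hlip.mono fun n hn => hn w hw)
  have hη : 0 < min ρ (ε / 3 / (2 * C / ρ + 1)) := by positivity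
  refine ⟨_, mem_nhdsWithin_of_mem_nhds (ball_mem_nhds z hη), ?_⟩
  filter_upwards [hlip, Metric.tendsto_nhds.1 (hf z hz) (ε/3) (by positivity)] with n hn hn2 w hw
  have hw1 : w ∈ ball z ρ := ball_subset_ball (min_le_left _ _) hw
  have hw2 : dist w z < ε / 3 / (2 * C / ρ + 1) := (mem_ball.1 hw).trans_le (min_le_right _ _)
  have hk : 2 * C / ρ * dist w z < ε / 3 := by
    rw [lt_div_iff₀ (by positivity)] at hw2
    have : 0 ≤ dist w z := dist_nonneg
    nlinarith
  have a := hn w hw1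
  have b := hlipf w hw1
  have := dist_triangle4 (f w) (f z) (F n z) (F n w)
  rw [dist_comm (f z), dist_comm (F n z) (F n w)] at this
  linarith

theorem ck_inv (f : ℂ → ℂ) (hf : DifferentiableOn ℂ f (ball 0 1)) (hi : Set.InjOn f (ball 0 1)) :
    ∃ ψ : ℂ → ℂ, DifferentiableOn ℂ ψ (f '' ball 0 1) ∧ IsOpen (f '' ball 0 1) ∧
      ∀ z ∈ ball (0:ℂ) 1, ψ (f z) = z ∧ deriv ψ (f z) * deriv f z = 1 := by
  have ha : AnalyticOnNhd ℂ f (ball 0 1) := hf.analyticOnNhd isOpen_ball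
  have hopen : ∀ s ⊆ ball (0:ℂ) 1, IsOpen s → IsOpen (f '' s) := by
    refine (ha.is_constant_or_isOpen (convex_ball _ _).isPreconnected).resolve_left ?_
    rintro ⟨w, hw⟩
    have h0 : (0:ℂ) ∈ ball (0:ℂ) 1 := by simp
    have h1 : (1/2:ℂ) ∈ ball (0:ℂ) 1 := by simp; norm_num
    have := hi h0 h1 ((hw _ h0).trans (hw _ h1).symm)
    norm_num at this
  set ψ := Function.invFunOn f (ball 0 1) with hψ
  have hl : ∀ z ∈ ball (0:ℂ) 1, ψ (f z) = z := fun z hz => hi.leftInvOn_invFunOn hz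
  have hr : ∀ w ∈ f '' ball (0:ℂ) 1, f (ψ w) = w := by
    rintro _ ⟨z, hz, rfl⟩; rw [hl z hz]
  have ho := hopen _ subset_rfl isOpen_ball
  have hc : ∀ z ∈ ball (0:ℂ) 1, ContinuousAt ψ (f z) := by
    intro z hz
    rw [ContinuousAt, hl z hz]
    intro t ht
    obtain ⟨s, hs, hso, hzs⟩ := _root_.mem_nhds_iff.1 (inter_mem ht (isOpen_ball.mem_nhds hz))
    rw [mem_map]
    filter_upwards [(hopen s (hs.trans Set.inter_subset_right) hso).mem_nhds ⟨z, hzs, rfl⟩]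
    rintro _ ⟨x, hx, rfl⟩
    rw [Set.mem_preimage, hl x (hs hx).2]
    exact (hs hx).1
  have hd1 : ∀ z ∈ ball (0:ℂ) 1, deriv f z ≠ 0 → DifferentiableAt ℂ ψ (f z) := by
    intro z hz hne
    refine (HasDerivAt.of_local_left_inverse (f := f) (f' := deriv f z) (hc z hz) ?_ hne ?_).differentiableAt
    · rw [hl z hz]; exact (hf.differentiableAt (isOpen_ball.mem_nhds hz)).hasDerivAt
    · filter_upwards [ho.mem_nhds ⟨z, hz, rfl⟩] with w hw using hr w hw
  have hd : ∀ z ∈ ball (0:ℂ) 1, DifferentiableAt ℂ ψ (f z) := by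
    intro z hz
    refine (Complex.analyticAt_of_differentiable_on_punctured_nhds_of_continuousAt ?_ (hc z hz)).differentiableAt
    have hda : AnalyticAt ℂ (deriv f) z := (ha z hz).deriv
    have hev : ∀ᶠ x in nhdsWithin z {z}ᶜ, deriv f x ≠ 0 := by
      refine hda.eventually_eq_zero_or_eventually_ne_zero.resolve_left ?_
      intro h0
      obtain ⟨r, hr, hrs⟩ := Metric.mem_nhds_iff.1 (inter_mem h0 (isOpen_ball.mem_nhds hz))
      have hx : z + (r/2:ℝ) ∈ ball z r := by
        rw [mem_ball, dist_eq_norm, add_sub_cancel_left, Complex.norm_real, Real.norm_of_nonneg (by positivity)]; linarith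
      have := (convex_ball z r).is_const_of_fderivWithin_eq_zero (𝕜 := ℂ)
        (f := f) (hf.mono fun w hw => (hrs hw).2)
        (fun w hw => by
          rw [fderivWithin_of_isOpen isOpen_ball hw]
          ext; simpa using (hrs hw).1) (mem_ball_self hr) hx
      have := hi hz (hrs hx).2 this
      simp at this; linarith
    have ht : Tendsto ψ (nhdsWithin (f z) {f z}ᶜ) (nhdsWithin z {z}ᶜ) := by
      refine tendsto_nhdsWithin_iff.2 ⟨?_, ?_⟩
      · have := hc z hz
        rw [ContinuousAt, hl z hz] at this
        exact this.mono_left nhdsWithin_le_nhds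
      · filter_upwards [self_mem_nhdsWithin, mem_nhdsWithin_of_mem_nhds (ho.mem_nhds ⟨z, hz, rfl⟩)] with w hw hw2 h
        apply hw
        rw [Set.mem_singleton_iff] at h ⊢
        rw [← h, hr w hw2]
    filter_upwards [ht.eventually hev, mem_nhdsWithin_of_mem_nhds (ho.mem_nhds ⟨z, hz, rfl⟩)] with w hw hw2
    obtain ⟨x, hx, rfl⟩ := hw2
    rw [hl x hx] at hw
    exact hd1 x hx hw
  refine ⟨ψ, ?_, ho, fun z hz => ⟨hl z hz, ?_⟩⟩
  · rintro _ ⟨z, hz, rfl⟩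
    exact (hd z hz).differentiableWithinAt
  · have h1 := (hd z hz).hasDerivAt.comp z (hf.differentiableAt (isOpen_ball.mem_nhds hz)).hasDerivAt
    have h2 : HasDerivAt (ψ ∘ f) 1 z := by
      refine (hasDerivAt_id z).congr_of_eventuallyEq ?_
      filter_upwards [isOpen_ball.mem_nhds hz] with w hw using hl w hw
    exact h1.unique h2

theorem ck_koebe (δ R r : ℝ) (hδ : 0 < δ) (hR : 0 < R) (hr0 : 0 ≤ r) (hr : r < 1) :
    ∃ C, ∀ (f : ℂ → ℂ) (a : ℂ), DifferentiableOn ℂ f (ball 0 1) → Set.InjOn f (ball 0 1) →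
      ball (f 0) δ ⊆ f '' ball 0 1 → a ∉ f '' ball 0 1 → ‖f 0 - a‖ ≤ R ^ 2 →
      ∀ z ∈ closedBall (0:ℂ) r, ‖f z - a‖ ≤ C := by
  set η := δ / (3 * R) with hη
  have hη0 : 0 < η := by positivity
  refine ⟨(2 * R * Real.exp (2 * (Real.log (2 * R / η) + 1 ) * r / (1 - r)) + R) ^ 2, ?_⟩
  intro f a hf hi hball ha hRa z hz
  have hm : (0:ℂ) ∈ ball (0:ℂ) 1 := by simp
  obtain ⟨ψ, hψd, hψo, hψ⟩ := ck_inv f hf hi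
  have hne : ∀ z ∈ ball (0:ℂ) 1, f z - a ≠ 0 := by
    intro z hz h
    exact ha ⟨z, hz, sub_eq_zero.1 h⟩
  obtain ⟨Lf, hLfd, hLf⟩ := ck_log (fun z => f z - a) (hf.sub_const a) hne
  set h : ℂ → ℂ := fun z => Complex.exp (Lf z / 2) with hh
  have hhd : DifferentiableOn ℂ h (ball 0 1) := (hLfd.div_const 2).cexp
  have hsq : ∀ z ∈ ball (0:ℂ) 1, h z ^ 2 = f z - a := by
    intro z hz
    rw [← hLf z hz, hh, ← Complex.exp_nat_mul]; congr 1; push_cast; ring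
  have hh0R : ‖h 0‖ ≤ R := by
    have := hsq 0 hm
    have h2 : ‖h 0‖ ^ 2 ≤ R ^ 2 := by rw [← norm_pow, this]; exact hRa
    exact (sq_le_sq₀ (norm_nonneg _) hR.le).1 h2
  have hδR : δ ≤ R ^ 2 := by
    by_contra hlt
    push Not at hlt
    refine ha (hball ?_)
    rw [mem_ball, dist_comm, dist_eq_norm]; linarith
  have hηR : η ≤ R := by
    rw [hη, div_le_iff₀ (by positivity)]; nlinarith
  have hw : ∀ w ∈ ball (h 0) η, w ^ 2 + a ∈ f '' ball 0 1 := by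
    intro w hw
    apply hball
    rw [mem_ball, dist_eq_norm] at hw ⊢
    have e1 : w ^ 2 + a - f 0 = (w - h 0) * ((w - h 0) + 2 * h 0) := by
      have := hsq 0 hm
      linear_combination this
    rw [e1, norm_mul]
    have e2 : ‖w - h 0 + 2 * h 0‖ ≤ 3 * R := by
      refine (norm_add_le _ _).trans ?_
      rw [norm_mul]; simp; linarith
    calc _ ≤ ‖w - h 0‖ * (3 * R) := by gcongr
      _ < η * (3 * R) := by gcongr
      _ = δ := by rw [hη]; field_simp
  have heq : Set.EqOn (fun w => h (ψ (w ^ 2 + a))) id (ball (h 0) η) := by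
    have hp := (convex_ball (h 0) η).isPreconnected.eq_or_eq_neg_of_sq_eq
      (f := fun w => h (ψ (w ^ 2 + a))) (g := fun w => w) ?_ continuousOn_id ?_ ?_
    · refine hp.resolve_right fun hneg => ?_
      have := hneg (mem_ball_self hη0)
      simp only [hsq 0 hm, sub_add_cancel, (hψ 0 hm).1, Pi.neg_apply] at this
      have h0 : h 0 ≠ 0 := Complex.exp_ne_zero _
      have h3 : (2:ℂ) * h 0 = 0 := by linear_combination this
      simp [h0] at h3
    · refine hhd.continuousOn.comp (hψd.continuousOn.comp (by fun_prop) hw) ?_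
      intro w hw'
      obtain ⟨x, hx, hx2⟩ := hw w hw'
      simp only [← hx2, (hψ x hx).1]; exact hx
    · intro w hw'
      obtain ⟨x, hx, hx2⟩ := hw w hw'
      simp only [Pi.pow_apply, ← hx2, (hψ x hx).1, hsq x hx]
      rw [hx2]; ring
    · intro w hw' h0
      have := hw w hw'
      rw [h0] at this
      exact ha (by simpa using this)
  have hk : ∀ z ∈ ball (0:ℂ) 1, η ≤ ‖h z + h 0‖ := by
    intro z hz
    by_contra hlt
    push Not at hlt
    have hmem : -h z ∈ ball (h 0) η := by
      rw [mem_ball, dist_eq_norm]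
      have e : -h z - h 0 = -(h z + h 0) := by ring
      rw [e, norm_neg]; exact hlt
    have := heq hmem
    simp only [neg_sq, hsq z hz, sub_add_cancel, (hψ z hz).1, id] at this
    have h0 : h z ≠ 0 := Complex.exp_ne_zero _
    have h3 : (2:ℂ) * h z = 0 := by linear_combination this
    simp [h0] at h3
  obtain ⟨L, hLd, hL⟩ := ck_log (fun z => h z + h 0) (hhd.add_const _) (fun z hz h0 => by
    have := hk z hz
    rw [h0, norm_zero] at this; linarith)
  have hLre : ∀ z ∈ ball (0:ℂ) 1, (L z).re = Real.log ‖h z + h 0‖ := by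
    intro z hz
    rw [← hL z hz, Complex.norm_exp, Real.log_exp]
  have hk0 : ‖h 0 + h 0‖ ≤ 2 * R := (norm_add_le _ _).trans (by linarith)
  have hM : 0 < Real.log (2 * R / η) + 1 := by
    have : 0 ≤ Real.log (2 * R / η) := Real.log_nonneg (by rw [le_div_iff₀ hη0]; linarith)
    linarith
  have hz1 : ‖z‖ ≤ r := by simpa using hz
  have hzb : z ∈ ball (0:ℂ) 1 := by simp; linarith
  have hbc := Complex.borelCaratheodory_zero (f := fun z => L 0 - L z) (z := z) hM (R := 1)
    (by fun_prop) (by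
      intro x hx
      have e1 := Real.log_le_log hη0 (hk x hx)
      have e2 := Real.log_le_log (hη0.trans_le (hk 0 hm)) hk0
      rw [Set.mem_ofPred_eq, Complex.sub_re, hLre x hx, hLre 0 hm, Real.log_div (by positivity) hη0.ne']
      linarith) one_pos hzb (by simp)
  have hbc2 : 2 * (Real.log (2 * R / η) + 1 ) * ‖z‖ / (1 - ‖z‖) ≤ 2 * (Real.log (2 * R / η) + 1 ) * r / (1 - r) := by
    have : 0 < 1 - r := by linarith
    gcongr
  have hb3 : (L z).re - (L 0).re ≤ 2 * (Real.log (2 * R / η) + 1 ) * r / (1 - r) := by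
    have := Complex.re_le_norm (L z - L 0)
    rw [norm_sub_rev, Complex.sub_re] at this
    linarith
  have hb4 : ‖h z + h 0‖ ≤ 2 * R * Real.exp (2 * (Real.log (2 * R / η) + 1 ) * r / (1 - r)) := by
    rw [← hL z hzb, Complex.norm_exp]
    have : Real.exp (L z).re = Real.exp (L 0).re * Real.exp ((L z).re - (L 0).re) := by
      rw [← Real.exp_add]; congr 1; ring
    rw [this]
    have h5 : Real.exp (L 0).re ≤ 2 * R := by
      rw [← Complex.norm_exp, hL 0 hm]; exact hk0
    gcongr
  rw [← hsq z hzb, norm_pow]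
  have : ‖h z‖ ≤ ‖h z + h 0‖ + ‖h 0‖ := by
    have := norm_sub_le (h z + h 0) (h 0)
    simpa using this
  gcongr
  linarith

theorem ck_nc (f : ℂ → ℂ) (hi : Set.InjOn f (ball 0 1)) :
    ∀ z₀ ∈ ball (0:ℂ) 1, ∀ᶠ z in nhdsWithin z₀ {z₀}ᶜ, f z ≠ f z₀ := by
  intro z₀ hz₀
  filter_upwards [self_mem_nhdsWithin, mem_nhdsWithin_of_mem_nhds (isOpen_ball.mem_nhds hz₀)] with z hz hz2 h
  exact hz (hi hz2 hz₀ h)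

theorem ck_kernel (F : ℕ → ℂ → ℂ) (f : ℂ → ℂ)
    (hF : ∀ n, DifferentiableOn ℂ (F n) (ball 0 1)) (hi : ∀ n, Set.InjOn (F n) (ball 0 1))
    (hf : DifferentiableOn ℂ f (ball 0 1)) (hfi : Set.InjOn f (ball 0 1))
    (hlim : TendstoLocallyUniformlyOn F f atTop (ball 0 1)) (W : Set ℂ) (hWo : IsOpen W)
    (hWc : IsConnected W) (h0 : f 0 ∈ W) (hW : ∃ᶠ n in atTop, W ⊆ F n '' ball 0 1) :
    W ⊆ f '' ball 0 1 := by
  obtain ⟨ψ, -, ho, -⟩ := ck_inv f hf hfi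
  refine hWc.isPreconnected.subset_of_closure_inter_subset ho ⟨f 0, h0, 0, by simp, rfl⟩ ?_
  rintro w ⟨hwc, hwW⟩
  obtain ⟨r, hr, hrW⟩ := Metric.isOpen_iff.1 hWo w hwW
  obtain ⟨w', ⟨z', hz', rfl⟩, hw'⟩ := Metric.mem_closure_iff.1 hwc (r / 6) (by positivity)
  have hz1 : ‖z'‖ < 1 := by simpa using hz'
  set ρ := (1 - ‖z'‖) / 2 with hρ
  have hρ0 : 0 < ρ := by linarith
  have hnorm : ∀ x ∈ closedBall z' ρ, ‖x‖ ≤ ‖z'‖ + ρ := by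
    intro x hx
    rw [mem_closedBall, dist_eq_norm] at hx
    have := norm_add_le z' (x - z')
    rw [add_sub_cancel] at this; linarith
  have hsub : closedBall z' ρ ⊆ ball (0:ℂ) 1 := by
    intro x hx
    have := hnorm x hx
    rw [mem_ball_zero_iff]; linarith
  obtain ⟨δ, hδ, hev⟩ := ck_hurwitz atTop F f z' ρ hρ0 hsub hF hi hf (ck_nc f hfi z' hz') hlim
  set s := (1 + (‖z'‖ + ρ)) / 2 with hs
  have hs1 : s < 1 := by linarith
  have hsb : closedBall (0:ℂ) s ⊆ ball (0:ℂ) 1 := closedBall_subset_ball hs1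
  have hcl : IsClosed (f '' closedBall (0:ℂ) s) :=
    ((isCompact_closedBall (0:ℂ) s).image_of_continuousOn (hf.continuousOn.mono hsb)).isClosed
  refine Set.image_mono hsb ?_
  rw [← hcl.closure_eq, Metric.mem_closure_iff]
  intro ε hε
  have hu := (tendstoLocallyUniformlyOn_iff_forall_isCompact isOpen_ball).1 hlim _ hsb (isCompact_closedBall _ _)
  rw [Metric.tendstoUniformlyOn_iff] at hu
  obtain ⟨n, hn1, hn2, hn3⟩ := (hW.and_eventually (hev.and (hu ε hε))).exists
  obtain ⟨ψn, hd, -, hψn⟩ := ck_inv (F n) (hF n) (hi n)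
  obtain ⟨x, hx, hxw⟩ := hn1 hwW
  obtain ⟨x', hx', hxw'⟩ := hn2 (mem_ball_self hδ)
  have hbs : ball (f z') (5 * r / 6) ⊆ W := by
    refine (ball_subset_ball' ?_).trans hrW
    rw [dist_comm]; linarith
  have := ck_bc ψn (f z') w (5 * r / 6) (by positivity) (hd.mono (hbs.trans hn1)) (by
    intro y hy
    obtain ⟨t, ht, rfl⟩ := hn1 (hbs hy)
    rw [(hψn t ht).1]; simpa using ht) (by linarith)
  rw [← hxw, ← hxw', (hψn x hx).1, (hψn x' (hsub hx')).1] at this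
  have hx3 : x ∈ closedBall (0:ℂ) s := by
    have := hnorm x' hx'
    rw [mem_closedBall_zero_iff]; linarith
  refine ⟨f x, ⟨x, hx3, rfl⟩, ?_⟩
  rw [← hxw, dist_comm]
  exact hn3 x hx3

theorem ck_forward (l : Ultrafilter ℕ) (F : ℕ → ℂ → ℂ) (φ : ℂ → ℂ)
    (hl : (l : Filter ℕ) ≤ atTop)
    (hF : ∀ n, DifferentiableOn ℂ (F n) (ball 0 1)) (hi : ∀ n, Set.InjOn (F n) (ball 0 1))
    (hFd : ∀ n, (deriv (F n) 0).im = 0 ∧ 0 < (deriv (F n) 0).re)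
    (hφ : DifferentiableOn ℂ φ (ball 0 1)) (hφi : Set.InjOn φ (ball 0 1))
    (hφd : (deriv φ 0).im = 0 ∧ 0 < (deriv φ 0).re)
    (hproper : φ '' ball 0 1 ≠ Set.univ)
    (h1 : Tendsto (fun n => F n 0) atTop (nhds (φ 0)))
    (h2 : ∀ K : Set ℂ, K ⊆ φ '' ball 0 1 → IsCompact K → ∀ᶠ n in atTop, K ⊆ F n '' ball 0 1)
    (h3 : ∀ W : Set ℂ, IsOpen W → IsConnected W → φ 0 ∈ W →
          (∃ᶠ n in atTop, W ⊆ F n '' ball 0 1) → W ⊆ φ '' ball 0 1) :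
    TendstoLocallyUniformlyOn F φ l (ball 0 1) := by
  have hm : (0:ℂ) ∈ ball (0:ℂ) 1 := by simp
  obtain ⟨ψ, hψd, hUo, hψ⟩ := ck_inv φ hφ hφi
  -- lower radius
  obtain ⟨δ, hδ, hδn⟩ : ∃ δ > 0, ∀ᶠ n in atTop, ball (F n 0) δ ⊆ F n '' ball 0 1 := by
    obtain ⟨ρ, hρ, hs⟩ := (nhds_basis_closedBall.mem_iff).1 (hUo.mem_nhds ⟨0, hm, rfl⟩)
    refine ⟨ρ / 2, by positivity, ?_⟩
    filter_upwards [h2 _ hs (isCompact_closedBall _ _), Metric.tendsto_nhds.1 h1 (ρ/2) (by positivity)] with n hn hn2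
    refine Set.Subset.trans ?_ hn
    refine ball_subset_closedBall.trans (closedBall_subset_closedBall' ?_)
    linarith
  -- omitted points
  obtain ⟨R, hR, hRn⟩ : ∃ R > 0, ∀ᶠ n in atTop, ∃ a, a ∉ F n '' ball 0 1 ∧ ‖F n 0 - a‖ ≤ R ^ 2 ∧ ‖a‖ ≤ R := by
    obtain ⟨b, hb⟩ := (Set.ne_univ_iff_exists_notMem _).1 hproper
    set R₀ := ‖b - φ 0‖ + 1 with hR₀
    have hR₀0 : 0 < R₀ := by positivity
    have hnot : ¬ ∃ᶠ n in atTop, ball (φ 0) R₀ ⊆ F n '' ball 0 1 := by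
      intro hfr
      refine hb (h3 _ isOpen_ball ((convex_ball _ _).isConnected ⟨_, mem_ball_self hR₀0⟩) (mem_ball_self hR₀0) hfr ?_)
      rw [mem_ball, dist_eq_norm]; linarith
    rw [not_frequently] at hnot
    refine ⟨R₀ + ‖φ 0‖ + 1, by positivity, ?_⟩
    filter_upwards [hnot, Metric.tendsto_nhds.1 h1 1 one_pos] with n hn hn2
    obtain ⟨a, ha, han⟩ := Set.not_subset.1 hn
    rw [mem_ball, dist_eq_norm] at ha
    refine ⟨a, han, ?_, ?_⟩
    · rw [dist_eq_norm] at hn2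
      have : ‖F n 0 - a‖ ≤ ‖F n 0 - φ 0‖ + ‖a - φ 0‖ := by
        have := norm_sub_le (F n 0 - φ 0) (a - φ 0)
        rwa [sub_sub_sub_cancel_right] at this
      have h0 := norm_nonneg (φ 0)
      nlinarith
    · have := norm_add_le (a - φ 0) (φ 0)
      rw [sub_add_cancel] at this; linarith
  obtain ⟨f, hlim⟩ := ck_montel l F hF (by
    intro r hr
    obtain ⟨C, hC⟩ := ck_koebe δ R (max r 0) hδ hR (le_max_right _ _) (by simp [hr])
    refine ⟨C + R, ?_⟩
    filter_upwards [hl hδn, hl hRn] with n hn ⟨a, ha1, ha2, ha3⟩ z hz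
    have := hC (F n) a (hF n) (hi n) hn ha1 ha2 z (closedBall_subset_closedBall (le_max_left _ _) hz)
    have h5 := norm_add_le (F n z - a) a
    rw [sub_add_cancel] at h5; linarith)
  have hf : DifferentiableOn ℂ f (ball 0 1) := hlim.differentiableOn (Eventually.of_forall hF) isOpen_ball
  have hfa : AnalyticOnNhd ℂ f (ball 0 1) := hf.analyticOnNhd isOpen_ball
  have hf0 : f 0 = φ 0 := tendsto_nhds_unique (hlim.tendsto_at hm) (h1.mono_left hl)
  have hlimd := hlim.deriv (Eventually.of_forall hF) isOpen_ball
  have hd0 : Tendsto (fun n => deriv (F n) 0) l (nhds (deriv f 0)) := hlimd.tendsto_at hm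
  have hfd1 : (deriv f 0).im = 0 := by
    refine tendsto_nhds_unique ((Complex.continuous_im.tendsto _).comp hd0) ?_
    exact tendsto_const_nhds.congr fun n => ((hFd n).1).symm
  have hfd2 : 0 ≤ (deriv f 0).re :=
    ge_of_tendsto' ((Complex.continuous_re.tendsto _).comp hd0) fun n => (hFd n).2.le
  have hfdn : δ ≤ ‖deriv f 0‖ := by
    refine ge_of_tendsto hd0.norm ?_
    filter_upwards [hl hδn] with n hn
    obtain ⟨ψn, hd, -, hψn⟩ := ck_inv (F n) (hF n) (hi n)
    have e := hψn 0 hm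
    have := Complex.norm_deriv_le_div_of_mapsTo_ball (f := ψn) (c := F n 0) (R₁ := δ) (R₂ := 1)
      (hd.mono hn) (by
        intro y hy
        obtain ⟨t, ht, rfl⟩ := hn hy
        rw [(hψn t ht).1, e.1]; exact ball_subset_closedBall ht) hδ
    have e2 : ‖deriv ψn (F n 0)‖ * ‖deriv (F n) 0‖ = 1 := by rw [← norm_mul, e.2, norm_one]
    rw [le_div_iff₀ hδ] at this
    by_contra hlt
    push Not at hlt
    have : ‖deriv ψn (F n 0)‖ ≠ 0 := by intro h; rw [h] at e2; simp at e2
    have : 0 < ‖deriv ψn (F n 0)‖ := by positivity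
    nlinarith
  have hfne : deriv f 0 ≠ 0 := by
    intro h; rw [h, norm_zero] at hfdn; linarith
  have hpc : IsPreconnected (ball (0:ℂ) 1) := (convex_ball _ _).isPreconnected
  have hncst : ¬ ∃ w, ∀ z ∈ ball (0:ℂ) 1, f z = w := by
    rintro ⟨w, hw⟩
    apply hfne
    have : f =ᶠ[nhds 0] fun _ => w := by
      filter_upwards [isOpen_ball.mem_nhds hm] with z hz using hw z hz
    rw [this.deriv_eq]; simp
  have hnc : ∀ z₀ ∈ ball (0:ℂ) 1, ∀ᶠ z in nhdsWithin z₀ {z₀}ᶜ, f z ≠ f z₀ := by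
    intro z₀ hz₀
    refine ((hfa z₀ hz₀).eventually_eq_or_eventually_ne analyticAt_const).resolve_left fun h => ?_
    exact hncst ⟨f z₀, hfa.eqOn_of_preconnected_of_eventuallyEq analyticOnNhd_const hpc hz₀ h⟩
  have hfU : ∀ z ∈ ball (0:ℂ) 1, f z ∈ φ '' ball 0 1 := by
    intro z hz
    have hz1 : ‖z‖ < 1 := by simpa using hz
    set r := (1 + ‖z‖) / 2 with hr
    have hr0 : 0 < r := by positivity
    have hrs : closedBall (0:ℂ) r ⊆ ball 0 1 := closedBall_subset_ball (by linarith)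
    have hK := ck_compact l F f hF hi hf hnc hlim (f '' closedBall 0 r)
      ((isCompact_closedBall (0:ℂ) r).image_of_continuousOn (hf.continuousOn.mono hrs)) (Set.image_mono hrs)
    have hrs' := ball_subset_closedBall.trans hrs
    refine h3 (f '' ball 0 r) ?_ ?_ ?_ ?_ ⟨z, ?_, rfl⟩
    · exact (hfa.is_constant_or_isOpen hpc).resolve_left hncst _ hrs' isOpen_ball
    · exact ((convex_ball _ _).isConnected ⟨0, mem_ball_self hr0⟩).image f (hf.continuousOn.mono hrs')
    · exact ⟨0, mem_ball_self hr0, hf0⟩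
    · exact (hK.mono fun n hn => (Set.image_mono ball_subset_closedBall).trans hn).frequently.filter_mono hl
    · rw [mem_ball_zero_iff]; linarith
  -- lower bound for the derivative of the limit
  have hge : ‖deriv φ 0‖ ≤ ‖deriv f 0‖ := by
    choose Ψ hΨd hΨo hΨ using fun n => ck_inv (F n) (hF n) (hi n)
    have hx : ∀ ρ, 0 < ρ → ρ < 1 → ∀ᶠ n in (l : Filter ℕ), φ 0 ∈ F n '' closedBall 0 ρ := by
      intro ρ h0 h1
      obtain ⟨δ', hδ', hev⟩ := ck_hurwitz l F f 0 ρ h0 (closedBall_subset_ball h1) hF hi hf (hnc 0 hm) hlim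
      exact hev.mono fun n hn => hn (by rw [hf0]; exact mem_ball_self hδ')
    have hx0 : Tendsto (fun n => Ψ n (φ 0)) l (nhds 0) := by
      rw [Metric.tendsto_nhds]
      intro ε hε
      have hmin : 0 < min (ε / 2) (1 / 2) := by positivity
      have hmin1 : min (ε / 2) (1 / 2) < 1 := (min_le_right _ _).trans_lt (by norm_num)
      filter_upwards [hx _ hmin hmin1] with n hn
      obtain ⟨x, hx, hxe⟩ := hn
      rw [← hxe, (hΨ n x (closedBall_subset_ball hmin1 hx)).1]
      have := (mem_closedBall.1 hx).trans (min_le_left _ _)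
      linarith
    have hconv : Tendsto (fun n => deriv (F n) (Ψ n (φ 0))) l (nhds (deriv f 0)) := by
      refine hlimd.tendsto_comp (((hf.deriv isOpen_ball).continuousOn) 0 hm) hm ?_
      exact tendsto_nhdsWithin_iff.2 ⟨hx0, hx0.eventually (isOpen_ball.mem_nhds hm)⟩
    have hlimr : Tendsto (fun n => (1 + ‖Ψ n (φ 0)‖) * ‖deriv (F n) (Ψ n (φ 0))‖) l (nhds ‖deriv f 0‖) := by
      have := (hx0.norm.const_add 1).mul hconv.norm
      simpa using this
    have hr : ∀ r, 0 < r → r < 1 → r * ‖deriv φ 0‖ ≤ ‖deriv f 0‖ := by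
      intro r h0 h1
      refine ge_of_tendsto hlimr ?_
      have hrs : closedBall (0:ℂ) r ⊆ ball 0 1 := closedBall_subset_ball h1
      filter_upwards [hl (h2 (φ '' closedBall 0 r) (Set.image_mono hrs)
        ((isCompact_closedBall (0:ℂ) r).image_of_continuousOn (hφ.continuousOn.mono hrs))), hx (1/2) (by norm_num) (by norm_num)] with n hn hn2
      obtain ⟨x, hx, hxe⟩ := hn2
      have hx1 : x ∈ ball (0:ℂ) 1 := closedBall_subset_ball (by norm_num) hx
      have hb : Set.MapsTo φ (ball 0 r) (F n '' ball 0 1) := fun y hy => hn ⟨y, ball_subset_closedBall hy, rfl⟩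
      have hS := Complex.norm_deriv_le_div_of_mapsTo_ball (f := Ψ n ∘ φ) (c := 0) (R₁ := r)
        (R₂ := 1 + ‖Ψ n (φ 0)‖) ((hΨd n).comp (hφ.mono (ball_subset_closedBall.trans hrs)) hb) (by
          intro y hy
          obtain ⟨t, ht, hte⟩ := hb hy
          rw [mem_closedBall, dist_eq_norm, Function.comp, Function.comp, ← hte, (hΨ n t ht).1]
          refine (norm_sub_le _ _).trans ?_
          have : ‖t‖ < 1 := by simpa using ht
          linarith) h0
      have hD : DifferentiableAt ℂ (Ψ n) (φ 0) :=
        (hΨd n).differentiableAt ((hΨo n).mem_nhds (hb (mem_ball_self h0)))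
      rw [deriv_comp _ hD (hφ.differentiableAt (isOpen_ball.mem_nhds hm)), norm_mul, le_div_iff₀ h0] at hS
      have e := hΨ n x hx1
      rw [hxe] at e
      have e2 : ‖deriv (Ψ n) (φ 0)‖ * ‖deriv (F n) x‖ = 1 := by rw [← norm_mul, e.2, norm_one]
      have := mul_le_mul_of_nonneg_right hS (norm_nonneg (deriv (F n) x))
      rw [e.1] at this ⊢
      calc r * ‖deriv φ 0‖ = ‖deriv (Ψ n) (φ 0)‖ * ‖deriv (F n) x‖ * (r * ‖deriv φ 0‖) := by rw [e2, one_mul]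
        _ = _ := by ring
        _ ≤ _ := this
    have ht : Tendsto (fun r : ℝ => r * ‖deriv φ 0‖) (nhdsWithin 1 (Set.Iio 1)) (nhds (1 * ‖deriv φ 0‖)) :=
      ((continuous_id.mul continuous_const).tendsto 1).mono_left nhdsWithin_le_nhds
    rw [one_mul] at ht
    refine le_of_tendsto ht ?_
    filter_upwards [Ioo_mem_nhdsLT (show (0:ℝ) < 1 by norm_num)] with r hr' using hr r hr'.1 hr'.2
  -- Schwarz
  have e0 := hψ 0 hm
  have hG : DifferentiableOn ℂ (ψ ∘ f) (ball 0 1) := hψd.comp hf hfU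
  have hG0 : (ψ ∘ f) 0 = 0 := by rw [Function.comp, hf0, e0.1]
  have hGm : Set.MapsTo (ψ ∘ f) (ball 0 1) (closedBall ((ψ ∘ f) 0) 1) := by
    intro y hy
    obtain ⟨t, ht, hte⟩ := hfU y hy
    rw [hG0, Function.comp, ← hte, (hψ t ht).1]
    exact ball_subset_closedBall ht
  have hGd : deriv (ψ ∘ f) 0 = deriv ψ (φ 0) * deriv f 0 := by
    have hD : DifferentiableAt ℂ ψ (f 0) := hψd.differentiableAt (hUo.mem_nhds (hfU 0 hm))
    rw [deriv_comp _ hD (hf.differentiableAt (isOpen_ball.mem_nhds hm)), hf0]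
  have hGle := Complex.norm_deriv_le_one_of_mapsTo_ball hG hGm one_pos
  have e2 : ‖deriv ψ (φ 0)‖ * ‖deriv φ 0‖ = 1 := by rw [← norm_mul, e0.2, norm_one]
  have hφpos : 0 < ‖deriv φ 0‖ := by
    rw [norm_pos_iff]; intro h; rw [h] at hφd; simp at hφd
  have hψpos : 0 < ‖deriv ψ (φ 0)‖ := by
    by_contra h
    have : ‖deriv ψ (φ 0)‖ = 0 := le_antisymm (not_lt.1 h) (norm_nonneg _)
    rw [this] at e2; simp at e2
  have hle : ‖deriv f 0‖ ≤ ‖deriv φ 0‖ := by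
    rw [hGd, norm_mul] at hGle
    by_contra h
    push Not at h
    nlinarith
  have hnormeq := le_antisymm hle hge
  have hreal : ∀ w : ℂ, w.im = 0 → 0 ≤ w.re → w = (‖w‖ : ℂ) := by
    intro w h h'
    have : w = (w.re : ℂ) := Complex.ext (by simp) (by simp [h])
    rw [this, Complex.norm_real, Real.norm_of_nonneg h']
  have hdeq : deriv f 0 = deriv φ 0 := by
    rw [hreal _ hfd1 hfd2, hreal _ hφd.1 hφd.2.le, hnormeq]
  have hG1 : deriv (ψ ∘ f) 0 = 1 := by rw [hGd, hdeq, e0.2]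
  have haff := Complex.affine_of_mapsTo_ball_of_norm_dslope_eq_div hG hGm hm (by simp [hG1])
  refine hlim.congr_right ?_
  intro z hz
  have := haff hz
  simp only [hG0, dslope_same, hG1] at this
  obtain ⟨t, ht, hte⟩ := hfU z hz
  simp only [Function.comp, ← hte, (hψ t ht).1] at this
  rw [← hte, this]; simp

/-- Carathéodory kernel theorem: for pointed simply connected
domains, kernel convergence `(Uₙ, uₙ) → (U, u)` is equivalent to uniform
convergence on compact subsets of `𝔻` of the normalized Riemann maps. -/
theorem caratheodory_kernel_theorem
    (Un : ℕ → Set ℂ) (un : ℕ → ℂ) (U : Set ℂ) (u : ℂ)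
    (hUnopen : ∀ n, IsOpen (Un n)) (hUnconn : ∀ n, IsConnected (Un n))
    (hUnsc : ∀ n, SimplyConnectedSpace (Un n)) (hUnproper : ∀ n, Un n ≠ Set.univ)
    (hun : ∀ n, un n ∈ Un n)
    (hUopen : IsOpen U) (hUconn : IsConnected U) (hUsc : SimplyConnectedSpace U)
    (hUproper : U ≠ Set.univ) (hu : u ∈ U)
    (φn : ℕ → ℂ → ℂ) (φ : ℂ → ℂ)
    (hφndiff : ∀ n, DifferentiableOn ℂ (φn n) (ball (0 : ℂ) 1))
    (hφnbij : ∀ n, Set.BijOn (φn n) (ball (0 : ℂ) 1) (Un n))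
    (hφn0 : ∀ n, φn n 0 = un n)
    (hφnderiv : ∀ n, (deriv (φn n) 0).im = 0 ∧ 0 < (deriv (φn n) 0).re)
    (hφdiff : DifferentiableOn ℂ φ (ball (0 : ℂ) 1))
    (hφbij : Set.BijOn φ (ball (0 : ℂ) 1) U)
    (hφ0 : φ 0 = u)
    (hφderiv : (deriv φ 0).im = 0 ∧ 0 < (deriv φ 0).re) :
    (Tendsto un atTop (nhds u) ∧
        (∀ K : Set ℂ, K ⊆ U → IsCompact K → ∀ᶠ n in atTop, K ⊆ Un n) ∧
        (∀ W : Set ℂ, IsOpen W → IsConnected W → u ∈ W →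
          (∃ᶠ n in atTop, W ⊆ Un n) → W ⊆ U)) ↔
      (∀ K : Set ℂ, K ⊆ ball (0 : ℂ) 1 → IsCompact K →
        TendstoUniformlyOn (fun n => φn n) φ atTop K) := by
  obtain rfl : Un = fun n => φn n '' ball 0 1 := funext fun n => (hφnbij n).image_eq.symm
  obtain rfl : un = fun n => φn n 0 := funext fun n => (hφn0 n).symm
  obtain rfl : U = φ '' ball 0 1 := hφbij.image_eq.symm
  subst hφ0
  have hi : ∀ n, Set.InjOn (φn n) (ball 0 1) := fun n => (hφnbij n).injOn
  have hφi := hφbij.injOn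
  constructor
  · rintro ⟨h1, h2, h3⟩ K hK hKc
    intro V hV
    refine mem_iff_ultrafilter.2 fun l hl => ?_
    have := ck_forward l φn φ hl hφndiff hi hφnderiv hφdiff hφi hφderiv hUproper h1 h2 h3
    exact (tendstoLocallyUniformlyOn_iff_forall_isCompact isOpen_ball).1 this K hK hKc V hV
  · intro h
    have hlim : TendstoLocallyUniformlyOn φn φ atTop (ball 0 1) :=
      (tendstoLocallyUniformlyOn_iff_forall_isCompact isOpen_ball).2 h
    refine ⟨hlim.tendsto_at (by simp), fun K hK hKc => ?_, fun W hWo hWc hW0 hW => ?_⟩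
    · exact ck_compact atTop φn φ hφndiff hi hφdiff (ck_nc φ hφi) hlim K hKc hK
    · exact ck_kernel φn φ hφndiff hi hφdiff hφi hlim W hWo hWc hW0 hW
end

section
/- Let p and q be coprime natural numbers with 1 ≤ p < q. Then there exists a unique strictly increasing function x : Fin q → ℝ with x i ∈ [0, 1) for every i, such that for every i ∈ Fin q, Int.fract(2 · x i) = x (i + p), where i + p denotes addition modulo q in Fin q. (Equivalently: the angle-doubling map D(t) = 2t mod 1 on ℝ/ℤ has exactly one periodic orbit of period q whose points, listed in increasing cyclic order, are permuted by D as the rotation by p/q.) -/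
/-- A solution of `2 z i = z (s i)` on a finite type vanishes. -/
lemma aux_zero {ι : Type*} [Finite ι] (s : ι → ι) (z : ι → ℝ)
    (h : ∀ i, 2 * z i = z (s i)) : z = 0 := by
  funext i
  have : Nonempty ι := ⟨i⟩
  obtain ⟨m, hm⟩ := Finite.exists_min z
  obtain ⟨M, hM⟩ := Finite.exists_max z
  have h1 := hm (s m)
  have h2 := hM (s M)
  have h3 := h m
  have h4 := h M
  have h5 := hm i
  have h6 := hM i
  simp only [Pi.zero_apply]
  linarith

lemma aux_solve {ι : Type*} [Fintype ι] (s : ι → ι) (d : ι → ℝ) :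
    ∃ x : ι → ℝ, ∀ i, 2 * x i = d i + x (s i) := by
  let L : (ι → ℝ) →ₗ[ℝ] (ι → ℝ) :=
    { toFun := fun x i => 2 * x i - x (s i)
      map_add' := by intro x y; funext i; simp only [Pi.add_apply]; ring
      map_smul' := by
        intro c x; funext i; simp only [Pi.smul_apply, smul_eq_mul, RingHom.id_apply]; ring }
  have hinj : Function.Injective L := by
    rw [injective_iff_map_eq_zero]
    intro z hz
    apply aux_zero s
    intro i
    have := congrFun hz i
    simp only [L, LinearMap.coe_mk, AddHom.coe_mk, Pi.zero_apply] at this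
    linarith
  obtain ⟨x, hx⟩ := (LinearMap.injective_iff_surjective.mp hinj) d
  refine ⟨x, fun i => ?_⟩
  have := congrFun hx i
  simp only [L, LinearMap.coe_mk, AddHom.coe_mk] at this
  linarith

lemma aux_hit (p q a : ℕ) (hcop : Nat.Coprime p q) (hq : 1 < q) (ha : a < q) :
    ∃ n : ℕ, (a + n * p) % q = q - 1 := by
  obtain ⟨k, -, hk⟩ := Nat.exists_mul_mod_eq_one_of_coprime hcop hq
  refine ⟨k * (q - 1 - a), ?_⟩
  have h1 : p * k ≡ 1 [MOD q] := by
    unfold Nat.ModEq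
    rw [hk, Nat.mod_eq_of_lt hq]
  have h2 : a + k * (q - 1 - a) * p ≡ a + (q - 1 - a) [MOD q] := by
    have := (h1.mul_right (q - 1 - a)).add_left a
    rw [one_mul] at this
    convert this using 2
    ring
  have h3 : a + (q - 1 - a) = q - 1 := by omega
  rw [h3] at h2
  rw [h2, Nat.mod_eq_of_lt (by omega)]

lemma aux_mod (a q : ℕ) (h : a < 2 * q) : a % q = if a < q then a else a - q := by
  split_ifs with h1
  · exact Nat.mod_eq_of_lt h1
  · rw [Nat.mod_eq_sub_mod (by omega), Nat.mod_eq_of_lt (by omega)]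

/-- uniqueness: digits are forced -/
lemma aux_digits (p q : ℕ) (hp : 1 ≤ p) (hpq : p < q) (hq : 0 < q) (x : Fin q → ℝ)
    (hx : StrictMono x) (hr : ∀ i, x i ∈ Set.Ico (0 : ℝ) 1)
    (hd : ∀ i : Fin q, Int.fract (2 * x i) = x ⟨((i : ℕ) + p) % q, Nat.mod_lt _ hq⟩)
    (i : Fin q) :
    2 * x i = (if (i : ℕ) < q - p then 0 else 1) +
      x ⟨((i : ℕ) + p) % q, Nat.mod_lt _ hq⟩ := by
  have key : ∀ j : Fin q, (2 * x j < 1 ∧ Int.fract (2 * x j) = 2 * x j) ∨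
      (1 ≤ 2 * x j ∧ Int.fract (2 * x j) = 2 * x j - 1) := by
    intro j
    obtain ⟨h0, h1⟩ := hr j
    rcases lt_or_ge (2 * x j) 1 with h | h
    · left
      exact ⟨h, Int.fract_eq_self.mpr ⟨by linarith, h⟩⟩
    · right
      refine ⟨h, ?_⟩
      rw [← Int.fract_sub_one]
      exact Int.fract_eq_self.mpr ⟨by linarith, by linarith⟩
  let u : Fin q := ⟨q - p - 1, by omega⟩
  let v : Fin q := ⟨q - p, by omega⟩
  have huv : x u < x v := hx (by rw [Fin.lt_def]; simp only [u, v]; omega)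
  have hu := hd u
  have hv := hd v
  have hlt : x ⟨((v : ℕ) + p) % q, Nat.mod_lt _ hq⟩ <
      x ⟨((u : ℕ) + p) % q, Nat.mod_lt _ hq⟩ := by
    apply hx
    rw [Fin.lt_def]
    simp only [u, v]
    rw [aux_mod _ _ (by omega), aux_mod _ _ (by omega)]
    split_ifs <;> omega
  rw [← hu, ← hv] at hlt
  have hu1 : 2 * x u < 1 ∧ 1 ≤ 2 * x v := by
    rcases key u with ⟨a, b⟩ | ⟨a, b⟩ <;> rcases key v with ⟨c, e⟩ | ⟨c, e⟩ <;>
      constructor <;> linarith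
  rw [← hd i]
  split_ifs with hi
  · have : x i ≤ x u := hx.monotone (by rw [Fin.le_def]; simp only [u]; omega)
    rcases key i with ⟨a, b⟩ | ⟨a, b⟩ <;> linarith [hu1.1]
  · have : x v ≤ x i := hx.monotone (by rw [Fin.le_def]; simp only [v]; omega)
    rcases key i with ⟨a, b⟩ | ⟨a, b⟩ <;> linarith [hu1.2]

lemma aux_exists (p q : ℕ) (hcop : Nat.Coprime p q) (hp : 1 ≤ p) (hpq : p < q) (hq : 0 < q)
    (x : Fin q → ℝ)
    (hx : ∀ i : Fin q, 2 * x i = (if (i : ℕ) < q - p then 0 else 1) +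
      x ⟨((i : ℕ) + p) % q, Nat.mod_lt _ hq⟩) :
    StrictMono x ∧ (∀ i, x i ∈ Set.Ico (0 : ℝ) 1) := by
  have : Nonempty (Fin q) := ⟨⟨0, hq⟩⟩
  let σ : Fin q → Fin q := fun i => ⟨((i : ℕ) + p) % q, Nat.mod_lt _ hq⟩
  let s : Fin q → Fin q := fun i => ⟨((i : ℕ) + 1) % q, Nat.mod_lt _ hq⟩
  let e : Fin q → ℝ := fun i => if (i : ℕ) = q - 1 then 1 else 0
  let z : Fin q → ℝ := fun i => x (s i) - x i + e i
  have hcomm : ∀ i, σ (s i) = s (σ i) := by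
    intro i
    simp only [σ, s, Fin.mk.injEq, Nat.mod_add_mod]
    congr 1; omega
  have hx' : ∀ i : Fin q, 2 * x i = (if (i : ℕ) < q - p then 0 else 1) + x (σ i) := hx
  have he0 : ∀ i, 0 ≤ e i := by intro i; simp only [e]; split_ifs <;> norm_num
  have hdig : ∀ i : Fin q, ((if ((s i : Fin q) : ℕ) < q - p then 0 else 1) : ℝ)
      - (if (i : ℕ) < q - p then 0 else 1) + e i = e (σ i) := by
    intro i
    have hi := i.2
    have h1 := aux_mod ((i : ℕ) + 1) q (by omega)
    have h2 := aux_mod ((i : ℕ) + p) q (by omega)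
    simp only [e, s, σ]
    split_ifs at h1 h2 ⊢ <;> first | omega | norm_num
  have hz : ∀ i, 2 * z i = z (σ i) + e i := by
    intro i
    have h1 := hx' i
    have h2 := hx' (s i)
    have h3 := hdig i
    rw [hcomm] at h2
    simp only [z]
    linarith
  obtain ⟨m, hm⟩ := Finite.exists_min z
  have hm0 : 0 ≤ z m := by linarith [hm (σ m), hz m, he0 m]
  have hmpos : 0 < z m := by
    by_contra hcon
    have hzm : z m = 0 := le_antisymm (not_lt.mp hcon) hm0
    have hall : ∀ n : ℕ, z ⟨((m : ℕ) + n * p) % q, Nat.mod_lt _ hq⟩ = 0 := by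
      intro n
      induction n with
      | zero =>
        have : (⟨((m : ℕ) + 0 * p) % q, Nat.mod_lt _ hq⟩ : Fin q) = m := by
          ext; simp [Nat.mod_eq_of_lt m.2]
        rw [this]; exact hzm
      | succ n ih =>
        have : (⟨((m : ℕ) + (n + 1) * p) % q, Nat.mod_lt _ hq⟩ : Fin q)
            = σ ⟨((m : ℕ) + n * p) % q, Nat.mod_lt _ hq⟩ := by
          simp only [σ, Fin.mk.injEq, Nat.mod_add_mod]
          congr 1; ring
        rw [this]
        have h1 := hz ⟨((m : ℕ) + n * p) % q, Nat.mod_lt _ hq⟩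
        have h2 := he0 ⟨((m : ℕ) + n * p) % q, Nat.mod_lt _ hq⟩
        have h3 := hm (σ ⟨((m : ℕ) + n * p) % q, Nat.mod_lt _ hq⟩)
        linarith
    obtain ⟨n, hn⟩ := aux_hit p q m hcop (by omega) m.2
    have h0 := hall n
    have h1 := hz ⟨((m : ℕ) + n * p) % q, Nat.mod_lt _ hq⟩
    have h2 : e ⟨((m : ℕ) + n * p) % q, Nat.mod_lt _ hq⟩ = 1 := by
      simp only [e, hn, if_true]
    have h3 := hm (σ ⟨((m : ℕ) + n * p) % q, Nat.mod_lt _ hq⟩)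
    linarith
  have hstep : ∀ (j : ℕ) (hj : j + 1 < q), x ⟨j, by omega⟩ < x ⟨j + 1, hj⟩ := by
    intro j hj
    have h1 := hm ⟨j, by omega⟩
    have h2 : e ⟨j, by omega⟩ = 0 := by
      simp only [e]; rw [if_neg (by omega)]
    have h3 : s ⟨j, by omega⟩ = ⟨j + 1, hj⟩ := by
      simp only [s, Fin.mk.injEq]; exact Nat.mod_eq_of_lt hj
    have h4 : z ⟨j, by omega⟩ = x ⟨j + 1, hj⟩ - x ⟨j, by omega⟩ := by
      simp only [z]; rw [h2, h3, add_zero]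
    linarith
  have hmono : StrictMono x := by
    have : ∀ (j : ℕ) (hj : j < q) (i : ℕ) (hij : i < j), x ⟨i, by omega⟩ < x ⟨j, hj⟩ := by
      intro j
      induction j with
      | zero => intro _ i hij; omega
      | succ j ih =>
        intro hj i hij
        have h1 := hstep j hj
        rcases Nat.lt_succ_iff_lt_or_eq.mp hij with h | h
        · exact (ih (by omega) i h).trans h1
        · subst h; exact h1
    intro i j hij
    exact this j j.2 i hij
  refine ⟨hmono, ?_⟩
  obtain ⟨a, ha⟩ := Finite.exists_min x
  obtain ⟨b, hb⟩ := Finite.exists_max x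
  have ha0 : 0 ≤ x a := by
    have h1 := hx' a
    have h2 := ha (σ a)
    split_ifs at h1 <;> linarith
  have hb1 : x b < 1 := by
    by_contra hcon
    have h1 := hx' b
    have h2 := hb (σ b)
    have h3 : x (σ b) = x b := by split_ifs at h1 <;> linarith
    have h4 := congrArg Fin.val (hmono.injective h3)
    simp only [σ] at h4
    rw [aux_mod _ _ (by have := b.2; omega)] at h4
    split_ifs at h4 <;> omega
  intro i
  exact ⟨ha0.trans (ha i), (hb i).trans_lt hb1⟩

/-- for coprime `1 ≤ p < q`, the angle-doubling map
`t ↦ 2t mod 1` has a unique periodic orbit of period `q` whose points, listed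
in increasing order in `[0,1)`, are permuted as the rotation by `p/q`. -/
theorem doubling_unique_rotation_orbit (p q : ℕ) (hcop : Nat.Coprime p q)
    (hp : 1 ≤ p) (hpq : p < q) :
    ∃! x : Fin q → ℝ, StrictMono x ∧ (∀ i, x i ∈ Set.Ico (0 : ℝ) 1) ∧
      ∀ i : Fin q, Int.fract (2 * x i) = x ⟨((i : ℕ) + p) % q, Nat.mod_lt _ (by omega)⟩ := by
  obtain ⟨x, hx⟩ := aux_solve (fun i : Fin q => (⟨((i : ℕ) + p) % q, Nat.mod_lt _ (by omega)⟩ : Fin q))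
    (fun i => if (i : ℕ) < q - p then 0 else 1)
  obtain ⟨hmono, hr⟩ := aux_exists p q hcop hp hpq (by omega) x hx
  refine ⟨x, ⟨hmono, hr, ?_⟩, ?_⟩
  · intro i
    have h := hx i
    have hr' := hr ⟨((i : ℕ) + p) % q, Nat.mod_lt _ (by omega)⟩
    rw [h]
    split_ifs
    · rw [zero_add]; exact Int.fract_eq_self.mpr hr'
    · rw [Int.fract_one_add]; exact Int.fract_eq_self.mpr hr'
  · rintro y ⟨hy1, hy2, hy3⟩
    have hy := aux_digits p q hp hpq (by omega) y hy1 hy2 hy3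
    have := aux_zero (fun i : Fin q => (⟨((i : ℕ) + p) % q, Nat.mod_lt _ (by omega)⟩ : Fin q))
      (fun i => y i - x i) (by
        intro i
        have h1 := hy i
        have h2 := hx i
        linarith)
    funext i
    have h := congrFun this i
    simp only [Pi.zero_apply] at h
    linarith
end

section
/- Let θ ∈ (0,1) be irrational. Define θ_1 = θ and θ_{n+1} = Int.fract(1/θ_n) for n ≥ 1 (each θ_n lies in (0,1) and is irrational), and let q_n denote the denominators of the continued fraction convergents p_n/q_n of θ. Then the series Σ_{n≥1} θ_1·θ_2···θ_{n−1}·log(1/θ_n) (with empty product equal to 1 for n = 1) converges if and only if the series Σ_{n≥1} log(q_{n+1})/q_n converges. -/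
theorem brjuno_aux (t : ℕ → ℝ) (Q : ℕ → ℝ)
    (ht0 : ∀ n, 0 < t n) (ht1 : ∀ n, t n < 1)
    (hQ0 : Q 0 = 1) (hQ1 : 1 ≤ Q 1) (hQm : ∀ n, Q (n + 1) + Q n ≤ Q (n + 2))
    (hid : ∀ n, (∏ i ∈ Finset.range (n + 1), t i) * Q (n + 1)
      + (∏ i ∈ Finset.range (n + 2), t i) * Q n = 1) :
    Summable (fun m : ℕ => (∏ i ∈ Finset.range m, t i) * Real.log (1 / t m)) ↔
      Summable (fun m : ℕ => Real.log (Q (m + 2)) / Q (m + 1)) := by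
  rw [summable_nat_add_iff (f := fun m : ℕ => Real.log (Q (m + 1)) / Q m) 1]
  have hge : ∀ n, 1 ≤ Q n ∧ Q n ≤ Q (n + 1) := by
    intro n
    induction n with
    | zero => exact ⟨hQ0.ge, by rw [hQ0]; exact hQ1⟩
    | succ n ih => exact ⟨ih.1.trans ih.2, by linarith [hQm n]⟩
  have hpos : ∀ n, 0 < Q n := fun n => lt_of_lt_of_le one_pos (hge n).1
  set P : ℕ → ℝ := fun m => ∏ i ∈ Finset.range m, t i with hP
  have hPpos : ∀ n, 0 < P n := fun n => Finset.prod_pos fun i _ => ht0 i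
  have hPs : ∀ n, P (n + 1) = P n * t n := fun n => Finset.prod_range_succ _ _
  have hid' : ∀ n, P (n + 1) * Q (n + 1) + P (n + 2) * Q n = 1 := hid
  have hPanti : ∀ n, P (n + 1) ≤ P n := fun n => by
    rw [hPs]; nlinarith [hPpos n, ht1 n]
  have hP0 : P 0 = 1 := by simp [hP]
  have hup : ∀ n, P n * Q n ≤ 1 := by
    rintro (_ | n)
    · simp [hP0, hQ0]
    · nlinarith [hid' n, mul_pos (hPpos (n + 2)) (hpos n)]
  have hlo : ∀ n, 1 ≤ 2 * (P n * Q n) := by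
    rintro (_ | n)
    · norm_num [hP0, hQ0]
    · have := mul_le_mul (hPanti (n + 1)) (hge n).2 (hpos n).le (hPpos (n + 1)).le
      linarith [hid' n]
  have hgrow : ∀ n, ((11 / 10 : ℝ) ^ n) ^ 2 ≤ 4 * Q n ∧
      ((11 / 10 : ℝ) ^ (n + 1)) ^ 2 ≤ 4 * Q (n + 1) := by
    intro n
    induction n with
    | zero => constructor <;> norm_num <;> linarith
    | succ n ih =>
      refine ⟨ih.2, ?_⟩
      have e : ((11 / 10 : ℝ) ^ (n + 1 + 1)) ^ 2 = ((11 / 10 : ℝ) ^ n) ^ 2 * (14641 / 10000) := by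
        ring
      rw [e]
      have h0 := hQm n
      have h1 := (hge n).2
      have := hpos n
      have h2 : Q (n + 1 + 1) = Q (n + 2) := rfl
      rw [h2]
      linarith [ih.1]
  have hs : ∀ n, 1 / Real.sqrt (Q n) ≤ 2 * (10 / 11 : ℝ) ^ n := by
    intro n
    have h1 : (11 / 10 : ℝ) ^ n ≤ 2 * Real.sqrt (Q n) := by
      refine (pow_le_pow_iff_left₀ (by positivity) (by positivity) two_ne_zero).1 ?_
      rw [mul_pow, Real.sq_sqrt (hpos n).le]
      linarith [(hgrow n).1]
    have h2 : 0 < Real.sqrt (Q n) := Real.sqrt_pos.2 (hpos n)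
    rw [div_le_iff₀ h2]
    have h3 : (10 / 11 : ℝ) ^ n * (11 / 10 : ℝ) ^ n = 1 := by
      rw [← mul_pow]; norm_num
    have h4 : (0 : ℝ) < (10 / 11 : ℝ) ^ n := by positivity
    nlinarith
  have hgeo : Summable (fun n : ℕ => 2 * (10 / 11 : ℝ) ^ n) :=
    (summable_geometric_of_lt_one (by norm_num) (by norm_num)).mul_left 2
  have hS1 : Summable (fun n => Real.log 2 / Q n) := by
    have : Summable (fun n => 1 / Q n) := by
      refine Summable.of_nonneg_of_le (fun n => by have := hpos n; positivity)
        (fun n => ?_) hgeo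
      refine le_trans ?_ (hs n)
      have h2 : 1 ≤ Real.sqrt (Q n) := Real.one_le_sqrt.2 (hge n).1
      apply one_div_le_one_div_of_le (by linarith)
      nlinarith [Real.sq_sqrt (hpos n).le]
    simpa [div_eq_mul_inv] using this.mul_left (Real.log 2)
  have hS2 : Summable (fun n => Real.log (Q n) / Q n) := by
    refine Summable.of_nonneg_of_le
      (fun n => div_nonneg (Real.log_nonneg (hge n).1) (hpos n).le)
      (fun n => ?_) (hgeo.mul_left 2)
    refine le_trans ?_ (mul_le_mul_of_nonneg_left (hs n) (by norm_num))
    have h2 : 0 < Real.sqrt (Q n) := Real.sqrt_pos.2 (hpos n)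
    have h3 := Real.log_le_self h2.le
    rw [Real.log_sqrt (hpos n).le] at h3
    rw [div_le_iff₀ (hpos n)]
    have h4 : 2 * (1 / Real.sqrt (Q n)) * Q n = 2 * Real.sqrt (Q n) := by
      field_simp
      rw [Real.sq_sqrt (hpos n).le]
    linarith
  have hlt : ∀ n, 0 ≤ Real.log (1 / t n) := fun n =>
    Real.log_nonneg (by rw [le_div_iff₀ (ht0 n)]; linarith [ht1 n])
  have hl : ∀ n, Real.log (1 / t n) = Real.log (P n) - Real.log (P (n + 1)) := by
    intro n
    rw [hPs, Real.log_mul (hPpos n).ne' (ht0 n).ne', one_div, Real.log_inv]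
    ring
  have hlup : ∀ n, Real.log (P n) + Real.log (Q n) ≤ 0 := by
    intro n
    rw [← Real.log_mul (hPpos n).ne' (hpos n).ne']
    exact Real.log_nonpos (mul_pos (hPpos n) (hpos n)).le (hup n)
  have hllo : ∀ n, 0 ≤ Real.log 2 + (Real.log (P n) + Real.log (Q n)) := by
    intro n
    rw [← Real.log_mul (hPpos n).ne' (hpos n).ne',
      ← Real.log_mul (by norm_num) (mul_pos (hPpos n) (hpos n)).ne']
    exact Real.log_nonneg (hlo n)
  have hlQ : ∀ n, 0 ≤ Real.log (Q n) := fun n => Real.log_nonneg (hge n).1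
  constructor
  · intro h
    refine Summable.of_nonneg_of_le (fun n => div_nonneg (hlQ _) (hpos n).le) (fun n => ?_)
      (((h.mul_left 2).add hS1).add hS2)
    have h1 : Real.log (Q (n + 1)) ≤ Real.log (1 / t n) + Real.log 2 + Real.log (Q n) := by
      linarith [hl n, hlup (n + 1), hllo n]
    have h3 : Real.log (1 / t n) ≤ 2 * (P n * Q n) * Real.log (1 / t n) :=
      le_mul_of_one_le_left (hlt n) (hlo n)
    have e : 2 * (P n * Real.log (1 / t n)) + Real.log 2 / Q n + Real.log (Q n) / Q n
        = (2 * (P n * Q n) * Real.log (1 / t n) + Real.log 2 + Real.log (Q n)) / Q n := by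
      have := (hpos n).ne'
      field_simp
    show _ ≤ 2 * (P n * Real.log (1 / t n)) + Real.log 2 / Q n + Real.log (Q n) / Q n
    rw [e]
    exact div_le_div_of_nonneg_right (by linarith) (hpos n).le
  · intro h
    refine Summable.of_nonneg_of_le (fun n => mul_nonneg (hPpos n).le (hlt n)) (fun n => ?_)
      (h.add hS1)
    have h1 : Real.log (1 / t n) ≤ Real.log (Q (n + 1)) + Real.log 2 := by
      linarith [hl n, hlup n, hllo (n + 1), hlQ n]
    rw [← add_div, le_div_iff₀ (hpos n)]
    calc P n * Real.log (1 / t n) * Q n = (P n * Q n) * Real.log (1 / t n) := by ring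
      _ ≤ Real.log (1 / t n) := mul_le_of_le_one_left (hlt n) (hup n)
      _ ≤ _ := h1


/-- for irrational `θ ∈ (0,1)`, with `θ₁ = θ`,
`θ_{n+1} = {1/θ_n}` the Gauss-map orbit and `q_n` the denominators of the
continued fraction convergents of `θ`, the Brjuno-Yoccoz series
`Σ θ₁⋯θ_{n-1} log(1/θ_n)` converges iff `Σ log(q_{n+1})/q_n` converges. -/
theorem brjuno_iff_yoccoz
    (θ : ℝ) (hθ : θ ∈ Set.Ioo (0 : ℝ) 1) (hirr : Irrational θ)
    (θseq : ℕ → ℝ) (hθ1 : θseq 1 = θ)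
    (hθrec : ∀ n, 1 ≤ n → θseq (n + 1) = Int.fract (1 / θseq n))
    (q : ℕ → ℕ) (hq0 : q 0 = 1) (hq1 : q 1 = ⌊1 / θ⌋₊)
    (hqrec : ∀ n, 1 ≤ n → q (n + 1) = ⌊1 / θseq (n + 1)⌋₊ * q n + q (n - 1)) :
    Summable (fun m : ℕ =>
        (∏ i ∈ Finset.Ico 1 (m + 1), θseq i) * Real.log (1 / θseq (m + 1))) ↔
      Summable (fun m : ℕ => Real.log (q (m + 2)) / (q (m + 1))) := by
  have hprop : ∀ n, Irrational (θseq (n + 1)) ∧ 0 < θseq (n + 1) ∧ θseq (n + 1) < 1 := by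
    intro n
    induction n with
    | zero => simpa [hθ1] using And.intro hirr hθ
    | succ n ih =>
      have h1 : Irrational (θseq (n + 1 + 1)) := by
        rw [hθrec (n + 1) (by omega), ← Int.self_sub_floor, one_div]
        exact ih.1.inv.sub_intCast _
      refine ⟨h1, lt_of_le_of_ne ?_ h1.ne_zero.symm, ?_⟩
      · rw [hθrec (n + 1) (by omega)]; exact Int.fract_nonneg _
      · rw [hθrec (n + 1) (by omega)]; exact Int.fract_lt_one _
  have hfl : ∀ n, 1 ≤ ⌊1 / θseq (n + 1)⌋₊ := by
    intro n
    obtain ⟨_, h0, h1⟩ := hprop n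
    apply Nat.le_floor
    rw [Nat.cast_one, le_div_iff₀ h0]; linarith
  have hdec : ∀ n, (⌊1 / θseq (n + 1)⌋₊ : ℝ) + θseq (n + 2) = 1 / θseq (n + 1) := by
    intro n
    obtain ⟨_, h0, h1⟩ := hprop n
    rw [hθrec (n + 1) (by omega), natCast_floor_eq_intCast_floor (by positivity)]
    exact Int.floor_add_fract _
  have hrec : ∀ n, q (n + 2) = ⌊1 / θseq (n + 2)⌋₊ * q (n + 1) + q n := fun n =>
    hqrec (n + 1) (by omega)
  have key := brjuno_aux (fun n => θseq (n + 1)) (fun n => (q n : ℝ))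
    (fun n => (hprop n).2.1) (fun n => (hprop n).2.2) (by simp [hq0])
    (by have := hfl 0; simp only [zero_add, hθ1] at this
        simp only [hq1]; exact_mod_cast this)
    (fun n => by
      have h := hrec n
      have h2 := Nat.mul_le_mul_right (q (n + 1)) (hfl (n + 1))
      have h3 : q (n + 1) + q n ≤ q (n + 2) := by rw [h]; simp only [one_mul] at h2; exact Nat.add_le_add_right h2 _
      exact_mod_cast h3)
    (by
      intro n
      induction n with
      | zero =>
        have h := hdec 0
        have h0 := (hprop 0).2.1
        simp only [zero_add, hθ1] at h h0
        simp only [Finset.prod_range_succ, Finset.prod_range_zero, zero_add, one_mul, hθ1, hq0,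
          hq1, Nat.cast_one, mul_one]
        rw [← mul_add, show (1 + 1 : ℕ) = 2 from rfl, h]
        field_simp
      | succ n ih =>
        have h := hdec (n + 1)
        have h0 := (hprop (n + 1)).2.1
        have hr : (q (n + 2) : ℝ) = ⌊1 / θseq (n + 2)⌋₊ * q (n + 1) + q n := by
          exact_mod_cast hrec n
        simp only [Finset.prod_range_succ _ (n + 2), Finset.prod_range_succ _ (n + 1)] at ih ⊢
        simp only [show n + 1 + 1 = n + 2 from rfl, show n + 1 + 2 = n + 3 from rfl,
          show n + 2 + 1 = n + 3 from rfl] at h h0 ih ⊢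
        rw [hr]
        have h' : θseq (n + 2) * (⌊1 / θseq (n + 2)⌋₊ : ℝ) + θseq (n + 2) * θseq (n + 3) = 1 := by
          rw [← mul_add, h]; field_simp
        linear_combination ih + (∏ i ∈ Finset.range (n + 1), θseq (i + 1)) * q (n + 1) * h')
  have e : ∀ m, ∏ i ∈ Finset.Ico 1 (m + 1), θseq i = ∏ i ∈ Finset.range m, θseq (i + 1) := by
    intro m
    rw [Finset.prod_Ico_eq_prod_range]
    simp [add_comm]
  simp only [e]
  exact key
end
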